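/- arXiv:0909.4760 — 2 statements merged into one kernel-verified Lean document; each statement's English description precedes it below -/
import Mathlib

section
/- Let p ≥ 1, r ≥ 1 and n ≥ 1 be integers. Consider the alphabet consisting of letters a_1, …, a_p and b. For each i let ε_i ∈ {+1, −1} and let W_i be a nonempty reduced word in the letters a_1, …, a_p, and set W = b^{ε_1} W_1 b^{ε_2} W_2 ⋯ b^{ε_r} W_r. Suppose that W_1, …, W_r freely generate a subgroup of the free group on a_1, …, a_p. Then the one-relator group G = ⟨a_1, …, a_p, b ∣ W^n⟩ is coherent. -/
/-- A word over the alphabet `α` (a list of letters with exponents `±1`) is *reduced*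
if it contains no adjacent pair of the form `(s, e) (s, ¬e)`. -/
def WordReduced {α : Type*} (w : List (α × Bool)) : Prop :=
  List.Chain' (fun p q => ¬(p.1 = q.1 ∧ p.2 = !q.2)) w

/-- A group is *finitely presented* if it is isomorphic to the quotient of a free group
on a finite set of generators by the normal closure of a finite set of relators. -/
def FinitelyPresentedGroup (G : Type*) [Group G] : Prop :=
  ∃ (α : Type) (_ : Fintype α) (rels : Finset (FreeGroup α)),
    Nonempty (PresentedGroup (rels : Set (FreeGroup α)) ≃* G)

/-- A group is *coherent* if every finitely generated subgroup is finitely presented. -/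
def CoherentGroup (G : Type*) [Group G] : Prop :=
  ∀ H : Subgroup G, H.FG → FinitelyPresentedGroup H

/-- Re-express a word over the alphabet `α` as a word over a larger alphabet `β`
via a map `f : α → β` of alphabets. -/
def embedWord {α β : Type*} (f : α → β) (w : List (α × Bool)) : List (β × Bool) :=
  w.map fun p => (f p.1, p.2)

/-- The word `W = b^{ε₁} W₁ b^{ε₂} W₂ ⋯ b^{ε_r} W_r` over the alphabet
`Fin p ⊕ Unit`, where `Sum.inl i` is the generator `aᵢ`, `Sum.inr ()` is `b`,
and the Boolean `ε i` records the sign of the exponent `±1` of the `i`-th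
occurrence of `b`. -/
def bWord (p r : ℕ) (ε : Fin r → Bool) (Wi : Fin r → List (Fin p × Bool)) :
    List ((Fin p ⊕ Unit) × Bool) :=
  ((List.finRange r).map fun i =>
    ((Sum.inr (), ε i) : (Fin p ⊕ Unit) × Bool) :: embedWord Sum.inl (Wi i)).flatten

/-
Let `L` be a finitely generated subgroup of the one-relator group `G`. It is the image of the
fundamental group of a finite part of the Schreier graph `G ⧸ L`, and one has to see that the
kernel is normally generated by finitely many `2`-cells. This is the perimeter method of McCammond
and Wise. A `2`-cell spelling the relator runs through `N = n * r` many `b`-edges, and at most `r`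
sides of `2`-cells are glued along each `b`-edge. Choose a finite set `Y` of `b`-edges that carries
the generators of `L` and along which as few sides of `2`-cells as possible are missing.

Consider labels on the closed paths in `Y` that are trivial on the `2`-cells in `Y`. Pulled back to
the Cayley graph of `G`, they extend over all of it. A `2`-cell with a single unlabelled edge
determines the label of that edge, and no two `2`-cells can compete for the same edge, as adding the
edge to `Y` would then decrease the perimeter. Once every remaining `2`-cell misses none or at least
two of its labels, the freeness of the `W i` enters: it makes the `2`-cells form a forest along the
`b`-edges, so the missing labels can be chosen from the roots outwards. The extended labels give a
homomorphism from `G` to a wreath product. It follows that a closed path in `Y` that is trivial in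
`G` is a product of conjugates of `2`-cells in `Y`.
-/

open Function Set

section OrbitProd

variable {S M M' : Type*} [Monoid M] [Monoid M']

/-- The ordered product `f s * f (τ s) * ⋯` over the first `m` points of the orbit of `s` under
`τ`. It describes both the label read along a polygon and, for `τ i = i + 1` on `ZMod r`, words
whose factors are indexed cyclically. -/
def orbitProd (τ : S → S) (f : S → M) : ℕ → S → M
  | 0, _ => 1
  | m + 1, s => f s * orbitProd τ f m (τ s)

theorem orbitProd_zero (τ : S → S) (f : S → M) (s : S) : orbitProd τ f 0 s = 1 := rfl

theorem orbitProd_succ (τ : S → S) (f : S → M) (m : ℕ) (s : S) :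
    orbitProd τ f (m + 1) s = f s * orbitProd τ f m (τ s) := rfl

theorem orbitProd_add (τ : S → S) (f : S → M) (m k : ℕ) (s : S) :
    orbitProd τ f (m + k) s = orbitProd τ f m s * orbitProd τ f k (τ^[m] s) := by
  induction m generalizing s with
  | zero => rw [Nat.zero_add, orbitProd_zero, one_mul, iterate_zero_apply]
  | succ m ih =>
    rw [Nat.succ_add, orbitProd_succ, ih, orbitProd_succ, mul_assoc, iterate_succ_apply]

theorem orbitProd_succ' (τ : S → S) (f : S → M) (m : ℕ) (s : S) :
    orbitProd τ f (m + 1) s = orbitProd τ f m s * f (τ^[m] s) := by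
  rw [orbitProd_add, orbitProd_succ, orbitProd_zero, mul_one]

theorem map_orbitProd {F : Type*} [FunLike F M M'] [MonoidHomClass F M M'] (g : F)
    (τ : S → S) (f : S → M) (m : ℕ) (s : S) :
    g (orbitProd τ f m s) = orbitProd τ (fun t => g (f t)) m s := by
  induction m generalizing s with
  | zero => exact map_one g
  | succ m ih => rw [orbitProd_succ, map_mul, ih, orbitProd_succ]

theorem orbitProd_congr {τ : S → S} {f f' : S → M} {m : ℕ} {s : S}
    (h : ∀ j < m, f (τ^[j] s) = f' (τ^[j] s)) : orbitProd τ f m s = orbitProd τ f' m s := by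
  induction m generalizing s with
  | zero => rfl
  | succ m ih =>
    rw [orbitProd_succ, orbitProd_succ, ih fun j hj => h (j + 1) (Nat.succ_lt_succ hj)]
    exact congrArg (· * _) (h 0 m.succ_pos)

theorem orbitProd_of_isPeriodicPt_mul {τ : S → S} {k : ℕ} {s : S} (hs : IsPeriodicPt τ k s)
    (f : S → M) (m : ℕ) : orbitProd τ f (m * k) s = orbitProd τ f k s ^ m := by
  induction m with
  | zero => rw [Nat.zero_mul, orbitProd_zero, pow_zero]
  | succ m ih => rw [Nat.succ_mul, orbitProd_add, ih, (hs.const_mul m).eq, pow_succ]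

variable {Γ : Type*} [Group Γ]

theorem orbitProd_mul_inv (τ : S → S) (z : S → Γ) (m : ℕ) (s : S) :
    orbitProd τ (fun t => z t * (z (τ t))⁻¹) m s = z s * (z (τ^[m] s))⁻¹ := by
  induction m with
  | zero => rw [orbitProd_zero, iterate_zero_apply, mul_inv_cancel]
  | succ m ih => rw [orbitProd_succ', ih, iterate_succ_apply', mul_assoc, inv_mul_cancel_left]

theorem orbitProd_iterate_eq_one {τ : S → S} {N : ℕ} {s : S} (hs : IsPeriodicPt τ N s) {f : S → Γ}
    (h : orbitProd τ f N s = 1) (m : ℕ) : orbitProd τ f N (τ^[m] s) = 1 := by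
  have hadd := orbitProd_add τ f N m s
  rwa [hs.eq, h, one_mul, Nat.add_comm, orbitProd_add, mul_eq_left] at hadd

end OrbitProd

section Signed

variable {M M' : Type*} [Group M] [Group M']

/-- The power `b ^ (±1)`, where the Boolean is the sign as in the words underlying `FreeGroup`. -/
def signed (b : M) (s : Bool) : M := cond s b b⁻¹

theorem map_signed (f : M →* M') (b : M) (s : Bool) : f (signed b s) = signed (f b) s := by
  cases s
  · exact map_inv f b
  · rfl

theorem signed_inj {b c : M} {s : Bool} : signed b s = signed c s ↔ b = c := by
  cases s
  · exact inv_inj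
  · rfl

theorem mk_singleton_eq_signed {α : Type*} (a : α) (s : Bool) :
    FreeGroup.mk [(a, s)] = signed (FreeGroup.of a) s := by
  cases s <;> rfl

theorem signed_signed (b : M) (s : Bool) : signed (signed b s) s = b := by
  cases s
  · exact inv_inv b
  · rfl

end Signed

/-! ### Polygon complexes and the perimeter -/

/-- A collection of polygons with at most `N` sides glued along edges: `S` is the set of sides,
`rot` passes to the next side of the same polygon, and `edge s` is the edge along which the side
`s` is glued. A polygon is the `rot`-orbit of any of its sides; it may be traversed several times
in `N` steps. Only the edges that are relevant for gluing are recorded. -/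
structure PolygonComplex (S E : Type*) (N : ℕ) where
  rot : S → S
  edge : S → E
  isPeriodicPt_rot : ∀ s, IsPeriodicPt rot N s

namespace PolygonComplex

variable {S E : Type*} {N : ℕ} (P : PolygonComplex S E N)

/-- All edges of the polygon of `s` belong to `B`. -/
def Within (B : Set E) (s : S) : Prop := ∀ m, P.edge (P.rot^[m] s) ∈ B

/-- The sides glued to an edge of `B` whose polygon is not contained in `B`. -/
def boundary (B : Set E) : Set S := {s | P.edge s ∈ B ∧ ¬P.Within B s}

/-- The number of sides at which polygons are missing along `B`. -/
noncomputable def perimeter (B : Set E) : ℕ := (P.boundary B).ncard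

/-- The edge of `x` is not in `B` while the remaining `N - 1` edges of its polygon are. -/
def IsFreeSide (B : Set E) (x : S) : Prop :=
  P.edge x ∉ B ∧ ∀ m, 0 < m → m < N → P.edge (P.rot^[m] x) ∈ B

/-- At most `d` sides are glued along each edge. -/
def DegreeLE (d : ℕ) : Prop := ∀ e, (P.edge ⁻¹' {e}).encard ≤ d

variable {P} {B C : Set E} {s x z : S}

theorem Within.mono (h : P.Within B s) (hBC : B ⊆ C) : P.Within C s := fun m => hBC (h m)

theorem Within.iterate (h : P.Within B s) (m : ℕ) : P.Within B (P.rot^[m] s) := fun k => by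
  rw [← iterate_add_apply]
  exact h (k + m)

theorem exists_rot_iterate_eq [NeZero N] (P : PolygonComplex S E N) (s : S) (m : ℕ) :
    ∃ k, P.rot^[k] (P.rot^[m] s) = s := by
  refine ⟨m * N - m, ?_⟩
  rw [← iterate_add_apply, Nat.sub_add_cancel (Nat.le_mul_of_pos_right m (NeZero.pos N))]
  exact (P.isPeriodicPt_rot s).const_mul m

theorem within_iterate_iff [NeZero N] (m : ℕ) : P.Within B (P.rot^[m] s) ↔ P.Within B s := by
  refine ⟨fun h => ?_, fun h => h.iterate m⟩
  obtain ⟨k, hk⟩ := P.exists_rot_iterate_eq s m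
  simpa only [hk] using h.iterate k

theorem within_of_forall_lt [NeZero N] (h : ∀ m < N, P.edge (P.rot^[m] s) ∈ B) : P.Within B s :=
  fun m => by
    rw [← (P.isPeriodicPt_rot s).iterate_mod_apply]
    exact h _ (Nat.mod_lt m (NeZero.pos N))

theorem finite_preimage_edge {d : ℕ} (hd : P.DegreeLE d) (hB : B.Finite) :
    (P.edge ⁻¹' B).Finite :=
  hB.preimage' fun e _ => finite_of_encard_le_coe (hd e)

theorem finite_boundary {d : ℕ} (hd : P.DegreeLE d) (hB : B.Finite) : (P.boundary B).Finite :=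
  (finite_preimage_edge hd hB).subset fun _ h => h.1

namespace IsFreeSide

variable [NeZero N]

theorem within_insert (hx : P.IsFreeSide B x) : P.Within (insert (P.edge x) B) x :=
  within_of_forall_lt fun m hm => by
    rcases m.eq_zero_or_pos with rfl | hpos
    · exact mem_insert _ _
    · exact mem_insert_of_mem _ (hx.2 m hpos hm)

theorem minimalPeriod_rot (hx : P.IsFreeSide B x) : minimalPeriod P.rot x = N := by
  have hper := P.isPeriodicPt_rot x
  refine (hper.minimalPeriod_le (NeZero.pos N)).eq_of_not_lt fun hlt => hx.1 ?_
  have hmem := hx.2 _ (hper.minimalPeriod_pos (NeZero.pos N)) hlt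
  rwa [iterate_minimalPeriod] at hmem

theorem iterate_injOn (hx : P.IsFreeSide B x) : InjOn (fun m => P.rot^[m] x) (Iio N) := by
  simpa only [hx.minimalPeriod_rot] using iterate_injOn_Iio_minimalPeriod (f := P.rot) (x := x)

theorem ncard_image_iterate (hx : P.IsFreeSide B x) :
    ((fun m => P.rot^[m] x) '' Ioo 0 N).ncard = N - 1 := by
  rw [(hx.iterate_injOn.mono fun _ h => h.2).ncard_image, ← Nat.card_coe_set_eq]
  simp

theorem image_iterate_subset_boundary (hx : P.IsFreeSide B x) :
    (fun m => P.rot^[m] x) '' Ioo 0 N ⊆ P.boundary B := by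
  rintro _ ⟨m, ⟨hpos, hlt⟩, rfl⟩
  exact ⟨hx.2 m hpos hlt, fun h => hx.1 ((within_iterate_iff m).1 h 0)⟩

theorem boundary_insert_subset (hx : P.IsFreeSide B x) :
    P.boundary (insert (P.edge x) B) ⊆
      P.boundary B \ (fun m => P.rot^[m] x) '' Ioo 0 N ∪
        P.edge ⁻¹' {P.edge x} \ {z | P.edge z = P.edge x ∧ P.Within (insert (P.edge x) B) z} := by
  rintro s ⟨hs | hs, hw⟩
  · exact Or.inr ⟨hs, fun h => hw h.2⟩
  · refine Or.inl ⟨⟨hs, fun h => hw (h.mono (subset_insert _ _))⟩, ?_⟩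
    rintro ⟨m, -, rfl⟩
    exact hw (hx.within_insert.iterate m)

theorem perimeter_insert_add_le (hx : P.IsFreeSide B x) (hd : P.DegreeLE N) (hB : B.Finite) :
    P.perimeter (insert (P.edge x) B) +
      {z | P.edge z = P.edge x ∧ P.Within (insert (P.edge x) B) z}.ncard ≤ P.perimeter B + 1 := by
  set F := P.edge ⁻¹' {P.edge x}
  set W := {z | P.edge z = P.edge x ∧ P.Within (insert (P.edge x) B) z}
  have hF : F.Finite := finite_of_encard_le_coe (hd _)
  have hFcard : F.ncard ≤ N := ENat.toNat_le_of_le_natCast (hd _)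
  have hWF : W.ncard + (F \ W).ncard = F.ncard := by
    rw [add_comm]
    exact ncard_sdiff_add_ncard_of_subset (fun z hz => hz.1) hF
  have hbd := finite_boundary hd hB
  have hsides := ncard_sdiff_add_ncard_of_subset hx.image_iterate_subset_boundary hbd
  rw [hx.ncard_image_iterate] at hsides
  have hsub : P.boundary (insert (P.edge x) B) ⊆ _ ∪ F \ W := hx.boundary_insert_subset
  have hle := (ncard_le_ncard hsub (hbd.sdiff.union hF.sdiff)).trans (ncard_union_le _ _)
  have hN := NeZero.pos N
  unfold perimeter
  omega

theorem perimeter_insert_le (hx : P.IsFreeSide B x) (hd : P.DegreeLE N) (hB : B.Finite) :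
    P.perimeter (insert (P.edge x) B) ≤ P.perimeter B := by
  have hle := hx.perimeter_insert_add_le hd hB
  have hpos : 0 < {z | P.edge z = P.edge x ∧ P.Within (insert (P.edge x) B) z}.ncard :=
    (ncard_pos ((finite_of_encard_le_coe (hd _)).subset fun z hz => hz.1)).2
      ⟨x, rfl, hx.within_insert⟩
  omega

theorem perimeter_insert_lt (hx : P.IsFreeSide B x) (hd : P.DegreeLE N) (hB : B.Finite)
    (hz : P.edge z = P.edge x) (hzw : P.Within (insert (P.edge x) B) z) (hzx : z ≠ x) :
    P.perimeter (insert (P.edge x) B) < P.perimeter B := by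
  have hle := hx.perimeter_insert_add_le hd hB
  have htwo : 1 < {z | P.edge z = P.edge x ∧ P.Within (insert (P.edge x) B) z}.ncard :=
    (one_lt_ncard ((finite_of_encard_le_coe (hd _)).subset fun z hz => hz.1)).2
      ⟨z, ⟨hz, hzw⟩, x, ⟨rfl, hx.within_insert⟩, hzx⟩
  omega

end IsFreeSide

variable (P)

/-- `P.Expansion Y B` means that `B` arises from `Y` by finitely many times gluing in a polygon
that has all but one of its edges, each time adding the missing edge. -/
inductive Expansion (Y : Set E) : Set E → Prop
  | refl : Expansion Y Y
  | insert {B : Set E} {x : S} :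
      Expansion Y B → P.IsFreeSide B x → Expansion Y (insert (P.edge x) B)

/-- The union of all expansions of `Y`. -/
def hull (Y : Set E) : Set E := {e | ∃ B, P.Expansion Y B ∧ e ∈ B}

/-- `Y` is finite and no finite set of edges containing `Y` has a smaller perimeter. -/
def PerimeterMinimal (Y : Set E) : Prop :=
  Y.Finite ∧ ∀ Z, Y ⊆ Z → Z.Finite → P.perimeter Y ≤ P.perimeter Z

theorem exists_perimeterMinimal {Y₀ : Set E} (hY₀ : Y₀.Finite) :
    ∃ Y, Y₀ ⊆ Y ∧ P.PerimeterMinimal Y := by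
  obtain ⟨Y, ⟨hY₀Y, hY⟩, hmin⟩ := exists_minimalFor_of_wellFoundedLT
    (fun Y => Y₀ ⊆ Y ∧ Y.Finite) P.perimeter ⟨Y₀, Subset.rfl, hY₀⟩
  refine ⟨Y, hY₀Y, hY, fun Z hYZ hZ => ?_⟩
  exact (le_total _ _).elim id (hmin ⟨hY₀Y.trans hYZ, hZ⟩)

variable {P} {Y : Set E}

namespace Expansion

theorem subset (h : P.Expansion Y B) : Y ⊆ B := by
  induction h with
  | refl => exact Subset.rfl
  | insert _ _ ih => exact ih.trans (subset_insert _ _)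

theorem finite (h : P.Expansion Y B) (hY : Y.Finite) : B.Finite := by
  induction h with
  | refl => exact hY
  | insert _ _ ih => exact ih.insert _

theorem perimeter_le [NeZero N] (h : P.Expansion Y B) (hd : P.DegreeLE N) (hY : Y.Finite) :
    P.perimeter B ≤ P.perimeter Y := by
  induction h with
  | refl => exact le_rfl
  | insert hB hx ih => exact (hx.perimeter_insert_le hd (hB.finite hY)).trans ih

theorem union (hB : P.Expansion Y B) (hC : P.Expansion Y C) : P.Expansion Y (B ∪ C) := by
  induction hC with
  | refl => rwa [union_eq_self_of_subset_right hB.subset]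
  | @insert C x _ hx ih =>
    rw [union_insert]
    by_cases hmem : P.edge x ∈ B ∪ C
    · rwa [insert_eq_of_mem hmem]
    · exact ih.insert ⟨hmem, fun m hpos hlt => Or.inr (hx.2 m hpos hlt)⟩

theorem subset_hull (h : P.Expansion Y B) : B ⊆ P.hull Y := fun _ he => ⟨B, h, he⟩

/-- A second polygon completed by the same edge would decrease the perimeter. -/
theorem eq_of_within_insert [NeZero N] (h : P.Expansion Y B) (hd : P.DegreeLE N)
    (hY : P.PerimeterMinimal Y) (hx : P.IsFreeSide B x) (hz : P.edge z = P.edge x)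
    (hzw : P.Within (Insert.insert (P.edge x) B) z) : z = x := by
  by_contra hzx
  have hmin := hY.2 _ (h.insert hx).subset ((h.insert hx).finite hY.1)
  have hlt := hx.perimeter_insert_lt hd (h.finite hY.1) hz hzw hzx
  exact (hmin.trans_lt hlt).not_ge (h.perimeter_le hd hY.1)

end Expansion

theorem subset_hull (P : PolygonComplex S E N) (Y : Set E) : Y ⊆ P.hull Y :=
  Expansion.refl.subset_hull

theorem exists_expansion_of_finite_subset_hull {F : Set E} (hF : F.Finite) (hFY : F ⊆ P.hull Y) :
    ∃ B, P.Expansion Y B ∧ F ⊆ B := by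
  induction F, hF using Set.Finite.induction_on with
  | empty => exact ⟨Y, .refl, empty_subset _⟩
  | insert _ _ ih =>
    obtain ⟨⟨B, hB, heB⟩, hFY⟩ := insert_subset_iff.1 hFY
    obtain ⟨C, hC, hFC⟩ := ih hFY
    exact ⟨B ∪ C, hB.union hC, insert_subset (Or.inl heB) (hFC.trans subset_union_right)⟩

theorem not_isFreeSide_hull (x : S) : ¬P.IsFreeSide (P.hull Y) x := by
  rintro ⟨hx, hothers⟩
  obtain ⟨B, hB, hsub⟩ := exists_expansion_of_finite_subset_hull
    ((finite_Ioo 0 N).image fun m => P.edge (P.rot^[m] x))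
    (image_subset_iff.2 fun m hm => hothers m hm.1 hm.2)
  have hfree : P.IsFreeSide B x :=
    ⟨fun h => hx (hB.subset_hull h), fun m hpos hlt => hsub (mem_image_of_mem _ ⟨hpos, hlt⟩)⟩
  exact hx ((hB.insert hfree).subset_hull (mem_insert _ _))

end PolygonComplex

/-! ### Labels with trivial product around each polygon -/

theorem exists_fixed_of_wellFounded {E Γ : Type*} [Nonempty Γ] {R : E → E → Prop}
    (hR : WellFounded R) (F : (E → Γ) → E → Γ)
    (hF : ∀ e l l', (∀ e', R e' e → l e' = l' e') → F l e = F l' e) : ∃ l, ∀ e, l e = F l e := by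
  classical
  let step (e : E) (rec : ∀ e', R e' e → Γ) : Γ :=
    F (fun e' => if h : R e' e then rec e' h else Classical.arbitrary Γ) e
  refine ⟨hR.fix step, fun e => ?_⟩
  rw [hR.fix_eq]
  exact hF e _ _ fun e' h => dif_pos h

namespace PolygonComplex

section Labels

variable {S E Γ : Type*} [Group Γ] {N : ℕ} (P : PolygonComplex S E N) (sign : S → Bool) (μ : S → Γ)

/-- The label of a side `s` when its edge is labelled by `l`: the edge is crossed in the direction
`sign s`, and then the fixed element `μ s` is read up to the next side. -/
def sideLabel (l : E → Γ) (s : S) : Γ := signed (l (P.edge s)) (sign s) * μ s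

/-- The product of the labels around every polygon contained in `B` is trivial. -/
def FlatOn (l : E → Γ) (B : Set E) : Prop :=
  ∀ s, P.Within B s → orbitProd P.rot (P.sideLabel sign μ l) N s = 1

/-- The label that the edge of `z` must have for the product of the labels around the polygon of
`z` to be trivial, the labels of the other edges being given by `l`. -/
def forcedLabel (l : E → Γ) (z : S) : Γ :=
  signed (μ z * orbitProd P.rot (P.sideLabel sign μ l) (N - 1) (P.rot z))⁻¹ (sign z)

variable {P sign μ} {l l' : E → Γ} {B C : Set E} {s z : S}

theorem orbitProd_sideLabel_eq_one_iff [NeZero N] :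
    orbitProd P.rot (P.sideLabel sign μ l) N z = 1 ↔
      l (P.edge z) = P.forcedLabel sign μ l z := by
  have hsplit : orbitProd P.rot (P.sideLabel sign μ l) N z = P.sideLabel sign μ l z *
      orbitProd P.rot (P.sideLabel sign μ l) (N - 1) (P.rot z) := by
    rw [← orbitProd_succ, Nat.sub_add_cancel NeZero.one_le]
  rw [hsplit, sideLabel, mul_assoc, ← eq_inv_iff_mul_eq_one, forcedLabel,
    ← signed_inj (s := sign z), signed_signed]

theorem forcedLabel_congr
    (h : ∀ m, 0 < m → m < N → l (P.edge (P.rot^[m] z)) = l' (P.edge (P.rot^[m] z))) :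
    P.forcedLabel sign μ l z = P.forcedLabel sign μ l' z := by
  have hrest : orbitProd P.rot (P.sideLabel sign μ l) (N - 1) (P.rot z) =
      orbitProd P.rot (P.sideLabel sign μ l') (N - 1) (P.rot z) :=
    orbitProd_congr fun m hm => by
      simp only [sideLabel, ← iterate_succ_apply, h (m + 1) m.succ_pos (Nat.add_lt_of_lt_sub hm)]
  rw [forcedLabel, forcedLabel, hrest]

theorem orbitProd_sideLabel_congr
    (h : ∀ m < N, l (P.edge (P.rot^[m] s)) = l' (P.edge (P.rot^[m] s))) :
    orbitProd P.rot (P.sideLabel sign μ l) N s = orbitProd P.rot (P.sideLabel sign μ l') N s :=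
  orbitProd_congr fun m hm => by simp only [sideLabel, h m hm]

theorem FlatOn.mono (h : P.FlatOn sign μ l C) (hBC : B ⊆ C) : P.FlatOn sign μ l B :=
  fun s hs => h s (hs.mono hBC)

theorem FlatOn.congr (h : P.FlatOn sign μ l B) (hl : EqOn l l' B) : P.FlatOn sign μ l' B :=
  fun s hs => (orbitProd_sideLabel_congr fun m _ => hl (hs m)).symm.trans (h s hs)

/-- The edges of the sides in `Sol`, one on each new polygon, are labelled recursively so as to
make the new polygons flat. -/
theorem FlatOn.exists_extension [NeZero N] (hl : P.FlatOn sign μ l B) (Sol : Set S) (ρ : E → ℕ)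
    (h_exists : ∀ s, P.Within C s → ¬P.Within B s → ∃ m, P.rot^[m] s ∈ Sol)
    (h_notMem : ∀ z ∈ Sol, P.edge z ∉ B) (h_inj : InjOn P.edge Sol)
    (h_rank : ∀ z ∈ Sol, ∀ m, 0 < m → m < N → ρ (P.edge (P.rot^[m] z)) < ρ (P.edge z)) :
    ∃ l', EqOn l' l B ∧ P.FlatOn sign μ l' C := by
  classical
  obtain ⟨l', hl'⟩ := exists_fixed_of_wellFounded (InvImage.wf ρ Nat.lt_wfRel.wf)
    (fun l' e => if e ∈ B then l e
      else if h : ∃ z ∈ Sol, P.edge z = e then P.forcedLabel sign μ l' h.choose else 1)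
    fun e l₁ l₂ h => by
      split_ifs with _ hz
      · rfl
      · refine forcedLabel_congr fun m hpos hlt => h _ ?_
        have hrank := h_rank _ hz.choose_spec.1 m hpos hlt
        rwa [hz.choose_spec.2] at hrank
      · rfl
  have h_eq : EqOn l' l B := fun e he => by rw [hl', if_pos he]
  have h_sol : ∀ z ∈ Sol, l' (P.edge z) = P.forcedLabel sign μ l' z := fun z hz => by
    have hex : ∃ z' ∈ Sol, P.edge z' = P.edge z := ⟨z, hz, rfl⟩
    rw [hl', if_neg (h_notMem z hz), dif_pos hex,
      h_inj hex.choose_spec.1 hz hex.choose_spec.2]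
  refine ⟨l', h_eq, fun s hs => ?_⟩
  by_cases hsB : P.Within B s
  · exact (hl.congr h_eq.symm) s hsB
  · obtain ⟨m, hm⟩ := h_exists s hs hsB
    obtain ⟨k, hk⟩ := P.exists_rot_iterate_eq s m
    rw [← hk]
    exact orbitProd_iterate_eq_one (P.isPeriodicPt_rot _)
      (orbitProd_sideLabel_eq_one_iff.2 (h_sol _ hm)) k

end Labels

section Covering

variable {S E S' E' : Type*} {N : ℕ}

/-- A map of polygon complexes for which the sides along an edge of `P` correspond to the sides
along its image in `Q`. -/
structure Covering (P : PolygonComplex S E N) (Q : PolygonComplex S' E' N) where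
  side : S → S'
  edge : E → E'
  side_rot : Semiconj side P.rot Q.rot
  edge_side : ∀ s, Q.edge (side s) = edge (P.edge s)
  existsUnique_lift : ∀ e s', Q.edge s' = edge e → ∃! s, P.edge s = e ∧ side s = s'

namespace Covering

variable {P : PolygonComplex S E N} {Q : PolygonComplex S' E' N} (p : Covering P Q)
  {B Y : Set E'} {x : S'}

theorem edge_rot_iterate_side (m : ℕ) (s : S) :
    Q.edge (Q.rot^[m] (p.side s)) = p.edge (P.edge (P.rot^[m] s)) := by
  rw [← (p.side_rot.iterate_right m).eq, p.edge_side]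

theorem within_side_iff {s : S} : Q.Within B (p.side s) ↔ P.Within (p.edge ⁻¹' B) s :=
  forall_congr' fun m => by rw [edge_rot_iterate_side, mem_preimage]

theorem isFreeSide_side {s : S} (h : P.IsFreeSide (p.edge ⁻¹' B) s) :
    Q.IsFreeSide B (p.side s) := by
  refine ⟨fun hmem => h.1 (by rwa [mem_preimage, ← p.edge_side]), fun m hpos hlt => ?_⟩
  rw [edge_rot_iterate_side]
  exact h.2 m hpos hlt

variable {Γ : Type*} [Group Γ] {sign : S → Bool} {μ : S → Γ} {l l' : E → Γ}

theorem exists_flatOn_insert [NeZero N] (hx : Q.IsFreeSide B x)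
    (huniq : ∀ z, Q.edge z = Q.edge x → Q.Within (insert (Q.edge x) B) z → z = x)
    (hl : P.FlatOn sign μ l (p.edge ⁻¹' B)) :
    ∃ l', EqOn l' l (p.edge ⁻¹' B) ∧ P.FlatOn sign μ l' (p.edge ⁻¹' insert (Q.edge x) B) := by
  classical
  refine hl.exists_extension {z | p.side z = x} (fun e => if p.edge e = Q.edge x then 1 else 0)
    (fun s hs hsB => ?_) ?_ ?_ ?_
  · obtain ⟨m, hm⟩ := not_forall.1 hsB
    refine ⟨m, huniq _ ?_ (p.within_side_iff.2 (hs.iterate m))⟩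
    rw [p.edge_side]
    exact (hs m).resolve_right hm
  · rintro z rfl hz
    exact hx.1 (by rwa [p.edge_side])
  · rintro z rfl z' hz' h
    exact (p.existsUnique_lift _ _ (p.edge_side z)).unique ⟨rfl, rfl⟩ ⟨h.symm, hz'⟩
  · rintro z rfl m hpos hlt
    have hmem := hx.2 m hpos hlt
    rw [edge_rot_iterate_side] at hmem
    have hne : p.edge (P.edge (P.rot^[m] z)) ≠ Q.edge (p.side z) := fun h => hx.1 (h ▸ hmem)
    rw [if_neg hne, if_pos (p.edge_side z).symm]
    exact one_pos

theorem exists_flatOn_of_expansion [NeZero N] (hQ : Q.DegreeLE N) (hY : Q.PerimeterMinimal Y)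
    (hB : Q.Expansion Y B) (hl : P.FlatOn sign μ l (p.edge ⁻¹' Y)) :
    ∃ l', EqOn l' l (p.edge ⁻¹' Y) ∧ P.FlatOn sign μ l' (p.edge ⁻¹' B) := by
  induction hB with
  | refl => exact ⟨l, fun _ _ => rfl, hl⟩
  | insert hB hx ih =>
    obtain ⟨l₁, hl₁, hflat₁⟩ := ih
    obtain ⟨l₂, hl₂, hflat₂⟩ := p.exists_flatOn_insert hx
      (fun _ hz hzw => hB.eq_of_within_insert hQ hY hx hz hzw) hflat₁
    exact ⟨l₂, (hl₂.mono (preimage_mono hB.subset)).trans hl₁, hflat₂⟩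

/-- Labels on an expansion are determined by those on `Y`, since each newly added edge bounds a
polygon whose other labels are known. -/
theorem eqOn_of_expansion [NeZero N] (hB : Q.Expansion Y B)
    (hl : P.FlatOn sign μ l (p.edge ⁻¹' B)) (hl' : P.FlatOn sign μ l' (p.edge ⁻¹' B))
    (h : EqOn l l' (p.edge ⁻¹' Y)) : EqOn l l' (p.edge ⁻¹' B) := by
  induction hB with
  | refl => exact h
  | @insert B x _ hx ih =>
    have hsub : p.edge ⁻¹' B ⊆ p.edge ⁻¹' insert (Q.edge x) B := preimage_mono (subset_insert _ _)
    have hEq := ih (hl.mono hsub) (hl'.mono hsub)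
    rintro e (he | he)
    · obtain ⟨z, ⟨rfl, rfl⟩, -⟩ := p.existsUnique_lift e x he.symm
      have hw := p.within_side_iff.1 hx.within_insert
      rw [orbitProd_sideLabel_eq_one_iff.1 (hl z hw), orbitProd_sideLabel_eq_one_iff.1 (hl' z hw)]
      refine forcedLabel_congr fun m hpos hlt => hEq ?_
      rw [mem_preimage, ← edge_rot_iterate_side]
      exact hx.2 m hpos hlt
    · exact hEq he

theorem exists_flatOn_hull [NeZero N] (hQ : Q.DegreeLE N) (hY : Q.PerimeterMinimal Y)
    (hl : P.FlatOn sign μ l (p.edge ⁻¹' Y)) :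
    ∃ l', EqOn l' l (p.edge ⁻¹' Y) ∧ P.FlatOn sign μ l' (p.edge ⁻¹' Q.hull Y) := by
  classical
  choose! L hLY hLflat using fun B (hB : Q.Expansion Y B) =>
    p.exists_flatOn_of_expansion hQ hY hB hl
  have hL_union : ∀ {B C}, Q.Expansion Y B → Q.Expansion Y C →
      EqOn (L B) (L (B ∪ C)) (p.edge ⁻¹' B) := fun {B C} hB hC =>
    p.eqOn_of_expansion hB (hLflat B hB)
      ((hLflat _ (hB.union hC)).mono (preimage_mono subset_union_left))
      ((hLY B hB).trans (hLY _ (hB.union hC)).symm)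
  let l' (e : E) : Γ := if h : p.edge e ∈ Q.hull Y then L h.choose e else 1
  have hl'_eq : ∀ {B}, Q.Expansion Y B → EqOn l' (L B) (p.edge ⁻¹' B) := fun {B} hB e he => by
    have hex : p.edge e ∈ Q.hull Y := hB.subset_hull he
    obtain ⟨hC, heC⟩ := hex.choose_spec
    calc l' e = L hex.choose e := dif_pos hex
      _ = L (hex.choose ∪ B) e := hL_union hC hB heC
      _ = L B e := by rw [union_comm]; exact (hL_union hB hC he).symm
  refine ⟨l', (hl'_eq .refl).trans (hLY Y .refl), fun s hs => ?_⟩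
  obtain ⟨B, hB, hsub⟩ := exists_expansion_of_finite_subset_hull
    ((finite_Iio N).image fun m => p.edge (P.edge (P.rot^[m] s)))
    (image_subset_iff.2 fun m _ => hs m)
  exact (hLflat B hB).congr (hl'_eq hB).symm s
    (within_of_forall_lt fun m hm => hsub (mem_image_of_mem _ hm))

end Covering

end Covering

section Forest

variable {S E : Type*} {N : ℕ}

/-- The polygons form a rooted forest: every polygon has a parent side, its other edges lie one
level deeper than the parent edge, and apart from its children each edge lies on at most one
polygon. -/
structure IsForest (P : PolygonComplex S E N) (depth : E → ℕ) (par : S → Prop) : Prop where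
  exists_par : ∀ s, ∃ m, par (P.rot^[m] s)
  depth_eq : ∀ s, par s → ∀ m, 0 < m → m < N →
    depth (P.edge (P.rot^[m] s)) = depth (P.edge s) + 1
  eq_of_edge_eq : ∀ s t, P.edge s = P.edge t → ¬par s → ¬par t → s = t

namespace IsForest

variable {P : PolygonComplex S E N} {depth : E → ℕ} {par : S → Prop} (hP : P.IsForest depth par)
  {s y z : S} {B : Set E}
include hP

theorem not_par_iterate (hs : par s) {m : ℕ} (hpos : 0 < m) (hlt : m < N) :
    ¬par (P.rot^[m] s) := fun h => by
  have hdown := hP.depth_eq s hs m hpos hlt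
  have hup := hP.depth_eq _ h (N - m) (Nat.sub_pos_of_lt hlt) (Nat.sub_lt (hpos.trans hlt) hpos)
  rw [← iterate_add_apply, Nat.sub_add_cancel hlt.le, (P.isPeriodicPt_rot s).eq] at hup
  omega

variable [NeZero N]

theorem iterate_eq_of_par (hs : par s) {m : ℕ} (hm : par (P.rot^[m] s)) : P.rot^[m] s = s := by
  rw [← (P.isPeriodicPt_rot s).iterate_mod_apply] at hm ⊢
  rcases (m % N).eq_zero_or_pos with h | h
  · rw [h, iterate_zero_apply]
  · exact absurd hm (hP.not_par_iterate hs h (Nat.mod_lt m (NeZero.pos N)))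

theorem exists_par_iterate_eq (s : S) : ∃ y m, par y ∧ m < N ∧ P.rot^[m] y = s := by
  obtain ⟨m, hm⟩ := hP.exists_par s
  obtain ⟨k, hk⟩ := P.exists_rot_iterate_eq s m
  refine ⟨_, k % N, hm, Nat.mod_lt k (NeZero.pos N), ?_⟩
  rwa [(P.isPeriodicPt_rot _).iterate_mod_apply]

theorem depth_of_not_par (hy : par y) {m : ℕ} (hm : ¬par (P.rot^[m] y)) :
    depth (P.edge (P.rot^[m] y)) = depth (P.edge y) + 1 := by
  rw [← (P.isPeriodicPt_rot y).iterate_mod_apply] at hm ⊢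
  refine hP.depth_eq y hy _ (Nat.pos_of_ne_zero fun h => hm ?_) (Nat.mod_lt m (NeZero.pos N))
  rwa [h, iterate_zero_apply]

theorem iterate_ne_self {m : ℕ} (hpos : 0 < m) (hlt : m < N) : P.rot^[m] s ≠ s := fun h => by
  obtain ⟨y, k, hy, -, rfl⟩ := hP.exists_par_iterate_eq s
  obtain ⟨j, hj⟩ := P.exists_rot_iterate_eq y k
  have hback := congrArg P.rot^[j] h
  rw [← iterate_add_apply, Nat.add_comm, iterate_add_apply, hj] at hback
  exact hP.not_par_iterate hy hpos hlt (by rwa [hback])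

theorem exists_solvingSides (hB : ∀ s, ¬P.IsFreeSide B s) :
    ∃ Sol : Set S, (∀ z ∈ Sol, ¬par z) ∧ (∀ z ∈ Sol, P.edge z ∉ B) ∧
      (∀ s, ¬P.Within B s → ∃ m, P.rot^[m] s ∈ Sol) ∧
      ∀ z ∈ Sol, ∀ m, P.rot^[m] z ∈ Sol → P.rot^[m] z = z := by
  have hex : ∀ y, ¬P.Within B y → ∃ k, 0 < k ∧ k < N ∧ P.edge (P.rot^[k] y) ∉ B := fun y hy => by
    by_contra! hall
    exact hB y ⟨fun hmem => hy (within_of_forall_lt fun m hm =>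
      m.eq_zero_or_pos.elim (fun h => h ▸ hmem) fun hpos => hall m hpos hm), hall⟩
  choose! k hpos hlt hk using hex
  refine ⟨{z | ∃ y, par y ∧ ¬P.Within B y ∧ P.rot^[k y] y = z}, ?_, ?_, fun s hs => ?_, ?_⟩
  · rintro _ ⟨y, hy, hyB, rfl⟩
    exact hP.not_par_iterate hy (hpos y hyB) (hlt y hyB)
  · rintro _ ⟨y, -, hyB, rfl⟩
    exact hk y hyB
  · obtain ⟨m, hm⟩ := hP.exists_par s
    refine ⟨k (P.rot^[m] s) + m, _, hm, ?_, (iterate_add_apply _ _ _ _).symm⟩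
    rwa [within_iterate_iff]
  · rintro _ ⟨y, hy, -, rfl⟩ m ⟨y', hy', -, h⟩
    obtain ⟨j, hj⟩ := P.exists_rot_iterate_eq y' (k y')
    rw [h, ← iterate_add_apply, ← iterate_add_apply] at hj
    have hyy : y' = y := hj.symm.trans (hP.iterate_eq_of_par hy (hj ▸ hy'))
    rw [← h, hyy]

/-- Solve for the label of one side in each polygon not contained in `B`, choosing a side that is
neither in `B` nor the parent. If the chosen edges are ordered by depth, and after the other edges
of the same depth, then each equation involves only earlier labels. -/
theorem exists_flatOn_univ {Γ : Type*} [Group Γ] {sign : S → Bool} {μ : S → Γ} {l : E → Γ}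
    (hl : P.FlatOn sign μ l B) (hB : ∀ s, ¬P.IsFreeSide B s) :
    ∃ l', EqOn l' l B ∧ P.FlatOn sign μ l' univ := by
  classical
  obtain ⟨Sol, h_not_par, h_notMem, h_exists, h_unique⟩ := hP.exists_solvingSides hB
  refine hl.exists_extension Sol (fun e => 2 * depth e + if e ∈ P.edge '' Sol then 1 else 0)
    (fun s _ => h_exists s) h_notMem
    (fun z hz z' hz' h => hP.eq_of_edge_eq z z' h (h_not_par z hz) (h_not_par z' hz'))
    fun z hz m hpos hlt => ?_
  obtain ⟨y, k, hy, -, rfl⟩ := hP.exists_par_iterate_eq z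
  rw [if_pos (mem_image_of_mem _ hz), hP.depth_of_not_par hy (h_not_par _ hz)]
  by_cases hpar : par (P.rot^[m] (P.rot^[k] y))
  · rw [← iterate_add_apply] at hpar ⊢
    rw [hP.iterate_eq_of_par hy hpar]
    split_ifs <;> omega
  · have hnot : P.edge (P.rot^[m] (P.rot^[k] y)) ∉ P.edge '' Sol := by
      rintro ⟨t, ht, hte⟩
      rw [hP.eq_of_edge_eq t _ hte (h_not_par t ht) hpar] at ht
      exact hP.iterate_ne_self hpos hlt (h_unique _ hz m ht)
    rw [if_neg hnot, ← iterate_add_apply]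
    rw [← iterate_add_apply] at hpar
    rw [hP.depth_of_not_par hy hpar]
    omega

end IsForest

/-- The perimeter argument: labels are first propagated to the hull of `Y`, and from there, free
sides being exhausted, along the forest. -/
theorem Covering.exists_flatOn_univ {S' E' : Type*} [NeZero N] {P : PolygonComplex S E N}
    {Q : PolygonComplex S' E' N} (p : Covering P Q) {depth : E → ℕ} {par : S → Prop}
    (hP : P.IsForest depth par) (hQ : Q.DegreeLE N) {Y : Set E'} (hY : Q.PerimeterMinimal Y)
    {Γ : Type*} [Group Γ] {sign : S → Bool} {μ : S → Γ} {l : E → Γ}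
    (hl : P.FlatOn sign μ l (p.edge ⁻¹' Y)) :
    ∃ l', EqOn l' l (p.edge ⁻¹' Y) ∧ P.FlatOn sign μ l' univ := by
  obtain ⟨l₁, hl₁, hflat₁⟩ := p.exists_flatOn_hull hQ hY hl
  obtain ⟨l₂, hl₂, hflat₂⟩ := hP.exists_flatOn_univ hflat₁
    fun s hs => Q.not_isFreeSide_hull _ (p.isFreeSide_side hs)
  exact ⟨l₂, (hl₂.mono (preimage_mono (Q.subset_hull Y))).trans hl₁, hflat₂⟩

end Forest

end PolygonComplex

/-! ### The tree of polygons -/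

namespace PolygonComplex

section StepComplex

variable {r N : ℕ} {E E' : Type*} {step : ZMod r → E → E} {step' : ZMod r → E' → E'}

/-- The rotation of `stepComplex`: from an edge `e`, viewed as a side of type `i` of a polygon, to
the next edge, which is a side of type `i + 1`. -/
def stepRot (step : ZMod r → E → E) (x : E × ZMod r) : E × ZMod r := (step x.2 x.1, x.2 + 1)

theorem snd_stepRot_iterate (m : ℕ) (x : E × ZMod r) : ((stepRot step)^[m] x).2 = x.2 + m := by
  induction m with
  | zero => rw [iterate_zero_apply, Nat.cast_zero, add_zero]
  | succ m ih => rw [iterate_succ_apply', stepRot, ih, Nat.cast_succ, add_assoc]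

/-- The complex in which each edge carries one side of every type `i : ZMod r`, and in which
`step i` moves from a side of type `i` to the next side of its polygon. -/
def stepComplex (step : ZMod r → E → E) (h : ∀ x, IsPeriodicPt (stepRot step) N x) :
    PolygonComplex (E × ZMod r) E N where
  rot := stepRot step
  edge := Prod.fst
  isPeriodicPt_rot := h

variable (h : ∀ x, IsPeriodicPt (stepRot step) N x) (h' : ∀ x, IsPeriodicPt (stepRot step') N x)

theorem stepComplex_degreeLE [NeZero r] (hrN : r ≤ N) :
    (stepComplex step h).DegreeLE N := fun e => by
  have hsub : Prod.fst ⁻¹' {e} ⊆ range fun i : ZMod r => (e, i) := by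
    rintro ⟨_, i⟩ rfl
    exact ⟨i, rfl⟩
  calc (Prod.fst ⁻¹' {e}).encard ≤ (range fun i : ZMod r => (e, i)).encard := encard_le_encard hsub
    _ = r := by
      rw [← image_univ, (Prod.mk_right_injective e).encard_image, encard_univ,
        ENat.card_eq_coe_fintype_card, ZMod.card]
    _ ≤ N := by exact_mod_cast hrN

/-- A map of edges compatible with the steps induces a covering. -/
def stepCovering (q : E → E') (hq : ∀ i, Semiconj q (step i) (step' i)) :
    Covering (stepComplex step h) (stepComplex step' h') where
  side := Prod.map q id
  edge := q
  side_rot x := Prod.ext (hq x.2 x.1) rfl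
  edge_side _ := rfl
  existsUnique_lift e s hs := ⟨(e, s.2), ⟨rfl, Prod.ext hs.symm rfl⟩, by
    rintro ⟨e', i⟩ ⟨rfl, rfl⟩
    rfl⟩

end StepComplex

end PolygonComplex

section Itinerary

variable {r N : ℕ} (ψ : ZMod N →+* ZMod r)

/-- The edge recorded by the itinerary `s` is not the exit of type `i` of the last polygon of `s`,
so that the side of type `i` at this edge belongs to a new polygon. -/
def IsFresh (i : ZMod r) (s : List (ZMod r × ZMod N)) : Prop := ∀ c ∈ s.head?, c.1 + ψ c.2 ≠ i

/-- In a tree of polygons with `N` sides whose types in `ZMod r` run cyclically, an edge is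
described by the polygons to be crossed from the root, last one first; `(i, m)` stands for crossing
a polygon from a side of type `i` to the side `m` steps further, and `IsFresh` forbids
backtracking. -/
inductive IsItinerary : List (ZMod r × ZMod N) → Prop
  | nil : IsItinerary []
  | cons {i m s} : m ≠ 0 → IsFresh ψ i s → IsItinerary s → IsItinerary ((i, m) :: s)

/-- The edges of the tree of polygons. -/
def Itinerary : Type := {s : List (ZMod r × ZMod N) // IsItinerary ψ s}

namespace Itinerary

/-- Cross the new polygon on the side of type `i` to its `m`-th next side. -/
def push (i : ZMod r) (m : ZMod N) (s : List (ZMod r × ZMod N)) : List (ZMod r × ZMod N) :=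
  if m = 0 then s else (i, m) :: s

/-- Move `m` sides further along the polygon on the side of type `i`, be it the last polygon of the
itinerary or a new one. -/
def advance (i : ZMod r) (m : ZMod N) : List (ZMod r × ZMod N) → List (ZMod r × ZMod N)
  | [] => push i m []
  | a :: t => if a.1 + ψ a.2 = i then push a.1 (a.2 + m) t else push i m (a :: t)

variable {ψ} {i : ZMod r} {s : List (ZMod r × ZMod N)}

theorem push_zero (i : ZMod r) (s : List (ZMod r × ZMod N)) : push i 0 s = s := if_pos rfl

theorem push_of_ne_zero {m : ZMod N} (hm : m ≠ 0) (i : ZMod r) (s : List (ZMod r × ZMod N)) :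
    push i m s = (i, m) :: s := if_neg hm

theorem advance_of_isFresh (h : IsFresh ψ i s) (m : ZMod N) : advance ψ i m s = push i m s := by
  cases s with
  | nil => rfl
  | cons a t => exact if_neg (h a rfl)

theorem advance_push (h : IsFresh ψ i s) (m m' : ZMod N) :
    advance ψ (i + ψ m) m' (push i m s) = push i (m + m') s := by
  by_cases hm : m = 0
  · rw [hm, push_zero, map_zero, add_zero, zero_add, advance_of_isFresh h]
  · rw [push_of_ne_zero hm]
    exact if_pos rfl

end Itinerary

open Itinerary

variable {ψ} {i : ZMod r} {s : List (ZMod r × ZMod N)}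

theorem IsItinerary.push (hs : IsItinerary ψ s) (h : IsFresh ψ i s) (m : ZMod N) :
    IsItinerary ψ (push i m s) := by
  unfold Itinerary.push
  split_ifs with hm
  · exact hs
  · exact .cons hm h hs

theorem IsItinerary.exists_eq_push (hs : IsItinerary ψ s) (i : ZMod r) :
    ∃ i₀ m t, IsFresh ψ i₀ t ∧ IsItinerary ψ t ∧ s = Itinerary.push i₀ m t ∧ i = i₀ + ψ m := by
  by_cases h : IsFresh ψ i s
  · exact ⟨i, 0, s, h, hs, (push_zero i s).symm, by rw [map_zero, add_zero]⟩
  · cases hs with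
    | nil => exact absurd (fun c hc => absurd hc (Option.not_mem_none c)) h
    | @cons i₀ m t hm hfresh ht =>
      refine ⟨i₀, m, t, hfresh, ht, (push_of_ne_zero hm i₀ t).symm, ?_⟩
      by_contra hne
      exact h fun c hc => Option.mem_some.1 hc ▸ Ne.symm hne

theorem IsItinerary.advance (hs : IsItinerary ψ s) (i : ZMod r) (m : ZMod N) :
    IsItinerary ψ (advance ψ i m s) := by
  obtain ⟨i₀, m₀, t, hfresh, ht, rfl, rfl⟩ := hs.exists_eq_push i
  rw [advance_push hfresh]
  exact ht.push hfresh _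

theorem IsItinerary.advance_zero (hs : IsItinerary ψ s) (i : ZMod r) :
    Itinerary.advance ψ i 0 s = s := by
  obtain ⟨i₀, m₀, t, hfresh, -, rfl, rfl⟩ := hs.exists_eq_push i
  rw [advance_push hfresh, add_zero]

theorem IsItinerary.advance_advance (hs : IsItinerary ψ s) (i : ZMod r) (m m' : ZMod N) :
    Itinerary.advance ψ (i + ψ m) m' (Itinerary.advance ψ i m s) =
      Itinerary.advance ψ i (m + m') s := by
  obtain ⟨i₀, m₀, t, hfresh, -, rfl, rfl⟩ := hs.exists_eq_push i
  rw [advance_push hfresh, advance_push hfresh, add_assoc, ← map_add, advance_push hfresh,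
    add_assoc]

namespace Itinerary

variable (ψ) in
/-- The permutation of the edges of the tree that moves to the next side of the polygon on the
side of type `i`. -/
def nextPerm (i : ZMod r) : Equiv.Perm (Itinerary ψ) where
  toFun s := ⟨advance ψ i 1 s.1, s.2.advance i 1⟩
  invFun s := ⟨advance ψ (i + 1) (-1) s.1, s.2.advance (i + 1) (-1)⟩
  left_inv s := Subtype.ext <| by
    have hadd := s.2.advance_advance i 1 (-1)
    rwa [map_one, add_neg_cancel, s.2.advance_zero] at hadd
  right_inv s := Subtype.ext <| by
    have hadd := s.2.advance_advance (i + 1) (-1) 1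
    rwa [map_neg, map_one, neg_add_cancel, s.2.advance_zero, add_neg_cancel_right] at hadd

theorem coe_nextPerm (i : ZMod r) (s : Itinerary ψ) : (nextPerm ψ i s).1 = advance ψ i 1 s.1 := rfl

theorem coe_orbitProd_nextPerm_inv (i : ZMod r) (m : ℕ) (s : Itinerary ψ) :
    ((orbitProd (· + 1) (fun j => (nextPerm ψ j)⁻¹) m i)⁻¹ s).1 = advance ψ i m s.1 := by
  induction m with
  | zero => rw [orbitProd_zero, inv_one, Nat.cast_zero, s.2.advance_zero, Equiv.Perm.one_apply]
  | succ m ih =>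
    rw [orbitProd_succ', mul_inv_rev, inv_inv, Equiv.Perm.mul_apply, coe_nextPerm, ih,
      Nat.cast_succ, ← s.2.advance_advance, map_natCast, add_right_iterate, nsmul_one]

theorem orbitProd_nextPerm_inv (i : ZMod r) :
    orbitProd (· + 1) (fun j => (nextPerm ψ j)⁻¹) N i = 1 := by
  refine inv_eq_one.1 (Equiv.ext fun s => Subtype.ext ?_)
  rw [coe_orbitProd_nextPerm_inv, ZMod.natCast_self, s.2.advance_zero, Equiv.Perm.one_apply]

end Itinerary

end Itinerary

section StepForest

open PolygonComplex Itinerary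

variable {r N : ℕ} {ψ : ZMod N →+* ZMod r} {E : Type*} {step : ZMod r → E → E}
  {σ : E → Itinerary ψ} (hσ : ∀ i, Semiconj σ (step i) (nextPerm ψ i))
include hσ

theorem coe_stepRot_iterate (x : E × ZMod r) (m : ℕ) :
    (σ ((stepRot step)^[m] x).1).1 = advance ψ x.2 m (σ x.1).1 := by
  induction m with
  | zero => rw [Nat.cast_zero, (σ x.1).2.advance_zero, iterate_zero_apply]
  | succ m ih =>
    rw [iterate_succ_apply', stepRot, (hσ _).eq, snd_stepRot_iterate, coe_nextPerm, ih,
      Nat.cast_succ, ← (σ x.1).2.advance_advance, map_natCast]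

theorem stepComplex_isForest [NeZero N] (h : ∀ x, IsPeriodicPt (stepRot step) N x) :
    (stepComplex step h).IsForest (fun e => (σ e).1.length)
      (fun x => IsFresh ψ x.2 (σ x.1).1) where
  exists_par x := by
    obtain ⟨i, m, t, hfresh, -, hpush, hi⟩ := (σ x.1).2.exists_eq_push x.2
    refine ⟨(-m).val, ?_⟩
    change IsFresh ψ ((stepRot step)^[(-m).val] x).2 (σ ((stepRot step)^[(-m).val] x).1).1
    rw [coe_stepRot_iterate hσ, snd_stepRot_iterate, ← map_natCast ψ, ZMod.natCast_zmod_val, hpush,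
      hi, advance_push hfresh, add_neg_cancel, push_zero, map_neg, add_neg_cancel_right]
    exact hfresh
  depth_eq x hx m hpos hlt := by
    have hm : (m : ZMod N) ≠ 0 := fun h0 =>
      (Nat.le_of_dvd hpos ((ZMod.natCast_eq_zero_iff m N).1 h0)).not_gt hlt
    change (σ ((stepRot step)^[m] x).1).1.length = _
    rw [coe_stepRot_iterate hσ, advance_of_isFresh hx, push_of_ne_zero hm]
    rfl
  eq_of_edge_eq x y hxy hx hy := by
    simp only [IsFresh, not_forall, not_not] at hx hy
    obtain ⟨c, hc, hxc⟩ := hx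
    obtain ⟨c', hc', hyc⟩ := hy
    have hcc : c = c' := Option.mem_unique (congrArg (fun e => (σ e).1.head?) hxy ▸ hc) hc'
    exact Prod.ext hxy (by rw [← hxc, ← hyc, hcc])

end StepForest

/-! ### Equivariant maps on one-relator groups -/

section FreeTuple

variable {r : ℕ} (ε : ZMod r → Bool)

/-- The elements `x j = b ^ (-ε j) * z j * (z (j + 1))⁻¹` of the free group on `b` (the generator
`none`) and `z j` (the generators `some j`), for which the product of all `b ^ ε j * x j`
telescopes. -/
def telescopingElt (j : ZMod r) : FreeGroup (Option (ZMod r)) :=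
  FreeGroup.mk [(none, !ε j)] *
    (FreeGroup.mk [(some j, true)] * FreeGroup.mk [(some (j + 1), false)])

/-- The elements of the free group whose reduced word starts with `b ^ (-ε j) * z j`, which form the
attracting set of `telescopingElt ε j` in a game of ping-pong. -/
def telescopingEltAttractor (j : ZMod r) : Set (FreeGroup (Option (ZMod r))) :=
  FreeGroup.startsWith (none, !ε j) ∩
    (FreeGroup.mk [(none, ε j)] * ·) ⁻¹' FreeGroup.startsWith (some j, true)

theorem mk_singleton_not {α : Type*} (a : α) (s : Bool) :
    FreeGroup.mk [(a, !s)] = (FreeGroup.mk [(a, s)])⁻¹ := rfl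

theorem eq_of_mem_startsWith {α : Type*} [DecidableEq α] {c c' : α × Bool} {v : FreeGroup α}
    (h : v ∈ FreeGroup.startsWith c) (h' : v ∈ FreeGroup.startsWith c') : c = c' :=
  Option.some.inj (h.symm.trans h')

theorem telescopingElt_mul_mem_attractor [Nontrivial (ZMod r)] (j : ZMod r)
    {v : FreeGroup (Option (ZMod r))} (hv : v ∉ FreeGroup.startsWith (some (j + 1), true)) :
    telescopingElt ε j * v ∈ telescopingEltAttractor ε j := by
  have h₁ := FreeGroup.startsWith_mk_mul (w := (some (j + 1), false)) v hv
  have h₂ := FreeGroup.startsWith_mk_mul (w := (some j, true)) _ fun h => by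
    simpa using eq_of_mem_startsWith h₁ h
  have h₃ := FreeGroup.startsWith_mk_mul (w := (none, !ε j)) _ fun h => by
    simpa using eq_of_mem_startsWith h₂ h
  rw [telescopingElt, mul_assoc, mul_assoc]
  refine ⟨h₃, ?_⟩
  rwa [mem_preimage, mk_singleton_not, mul_inv_cancel_left]

theorem telescopingElt_inv_mul_mem_startsWith [Nontrivial (ZMod r)] (j : ZMod r)
    {v : FreeGroup (Option (ZMod r))} (hv : v ∉ telescopingEltAttractor ε j) :
    (telescopingElt ε j)⁻¹ * v ∈ FreeGroup.startsWith (some (j + 1), true) := by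
  have h₁ : FreeGroup.mk [(none, ε j)] * v ∉ FreeGroup.startsWith (some j, true) := fun h => by
    refine hv ⟨?_, h⟩
    have hmem := FreeGroup.startsWith_mk_mul (w := (none, !ε j)) _ fun h' => by
      simpa using eq_of_mem_startsWith h h'
    rwa [mk_singleton_not, inv_mul_cancel_left] at hmem
  have h₂ := FreeGroup.startsWith_mk_mul (w := (some j, false)) _ h₁
  have h₃ := FreeGroup.startsWith_mk_mul (w := (some (j + 1), true)) _ fun h => by
    simpa using eq_of_mem_startsWith h₂ h
  rw [telescopingElt, mk_singleton_not none, mul_inv_rev, mul_inv_rev, inv_inv, mul_assoc,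
    mul_assoc]
  exact h₃

theorem injective_lift_telescopingElt [Nontrivial (ZMod r)] :
    Injective (FreeGroup.lift (telescopingElt ε)) := by
  refine FreeGroup.injective_lift_of_ping_pong (telescopingElt ε) (telescopingEltAttractor ε)
    (fun j => FreeGroup.startsWith (some (j + 1), true)) (fun j => ?_) (fun i j hij => ?_)
    (fun i j hij => ?_) (fun i j => ?_) (fun j => ?_) (fun j => ?_)
  · exact ⟨_, telescopingElt_mul_mem_attractor ε j fun h => FreeGroup.startsWith.ne_one 1 h rfl⟩
  · refine disjoint_left.2 fun v hi hj => hij ?_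
    have hsign : ε i = ε j := by simpa using eq_of_mem_startsWith hi.1 hj.1
    have hi' := hi.2
    rw [hsign] at hi'
    simpa using eq_of_mem_startsWith hi' hj.2
  · simpa using hij
  · exact disjoint_left.2 fun v hi hj => by simpa using eq_of_mem_startsWith hi.1 hj
  · rintro _ ⟨v, hv, rfl⟩
    exact telescopingElt_mul_mem_attractor ε j hv
  · rintro _ ⟨v, hv, rfl⟩
    exact telescopingElt_inv_mul_mem_startsWith ε j hv

theorem orbitProd_signed_mul_telescopingElt :
    orbitProd (· + 1) (fun j => signed (FreeGroup.of none) (ε j) * telescopingElt ε j) r 0 = 1 := by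
  have htel (j : ZMod r) : signed (FreeGroup.of none) (ε j) * telescopingElt ε j =
      FreeGroup.of (some j) * (FreeGroup.of (some (j + 1)))⁻¹ := by
    rw [telescopingElt, mk_singleton_not, mk_singleton_eq_signed none, mul_inv_cancel_left]
    rfl
  rw [funext htel, orbitProd_mul_inv (· + 1) fun j : ZMod r => FreeGroup.of (some j),
    add_right_iterate, nsmul_one, CharP.cast_eq_zero]
  simp only [add_zero, mul_inv_cancel]

theorem exists_injective_lift_orbitProd_eq_one [NeZero r] :
    ∃ (K : Type) (_ : Group K) (b : K) (x : ZMod r → K), Injective (FreeGroup.lift x) ∧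
      orbitProd (· + 1) (fun j => signed b (ε j) * x j) r 0 = 1 := by
  obtain rfl | hr := (Nat.one_le_iff_ne_zero.2 (NeZero.ne r)).eq_or_lt
  · refine ⟨FreeGroup (ZMod 1), inferInstance, signed (FreeGroup.of 0)⁻¹ (ε 0), FreeGroup.of,
      FreeGroup.lift_of_eq_id (ZMod 1) ▸ injective_id, ?_⟩
    rw [orbitProd_succ, orbitProd_zero, mul_one, signed_signed, inv_mul_cancel]
  · have : Fact (1 < r) := ⟨hr⟩
    exact ⟨_, inferInstance, FreeGroup.of none, telescopingElt ε, injective_lift_telescopingElt ε,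
      orbitProd_signed_mul_telescopingElt ε⟩

end FreeTuple

section Amalgam

theorem exists_hom_comp_eq_hom_comp.{u, v} {H : Type*} {F : Type u} {K : Type v} [Group H] [Group F]
    [Group K] {f : H →* F} {g : H →* K} (hf : Injective f) (hg : Injective g) :
    ∃ (G : Type (max u v)) (_ : Group G) (jF : F →* G) (jK : K →* G),
      Injective jK ∧ jF.comp f = jK.comp g := by
  let f' := (MonoidHom.inl F K).comp f
  let g' := (MonoidHom.inr F K).comp g
  have hf' : Injective f' := (Prod.mk_left_injective 1).comp hf
  have hg' : Injective g' := (Prod.mk_right_injective 1).comp hg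
  let φ := (MonoidHom.ofInjective hf').symm.trans (MonoidHom.ofInjective hg')
  let jF := (MulAut.conj (HNNExtension.t (φ := φ))).toMonoidHom.comp
    (HNNExtension.of.comp (MonoidHom.inl F K))
  refine ⟨HNNExtension (F × K) f'.range g'.range φ, inferInstance, jF,
    HNNExtension.of.comp (MonoidHom.inr F K),
    (HNNExtension.of_injective φ).comp (Prod.mk_right_injective 1), MonoidHom.ext fun h => ?_⟩
  have hφ : φ (MonoidHom.ofInjective hf' h) = MonoidHom.ofInjective hg' h :=
    congrArg (MonoidHom.ofInjective hg') ((MonoidHom.ofInjective hf').symm_apply_apply h)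
  exact (HNNExtension.equiv_eq_conj (MonoidHom.ofInjective hf' h)).symm.trans
    (congrArg HNNExtension.of (congrArg Subtype.val hφ))

theorem exists_equivariant_retraction {G K : Type*} [Group G] [Group K] {j : K →* G}
    (hj : Injective j) : ∃ κ : G → K, ∀ k g, κ (j k * g) = k * κ g := by
  obtain ⟨T, hT, -⟩ := j.range.exists_isComplement_right 1
  let e := MonoidHom.ofInjective hj
  refine ⟨fun g => e.symm (hT.equiv g).1, fun k g => ?_⟩
  have hmul := congrArg Prod.fst (hT.equiv_mul_left (e k) g)
  change (hT.equiv (j k * g)).1 = e k * (hT.equiv g).1 at hmul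
  change e.symm (hT.equiv (j k * g)).1 = k * e.symm (hT.equiv g).1
  rw [hmul, map_mul, e.symm_apply_apply]

end Amalgam

section CyclicRelator

variable {A : Type*} {r : ℕ} (ε : ZMod r → Bool) (w : ZMod r → FreeGroup A) (N : ℕ)

/-- The factor `b ^ ε i * w i` of the relator, where `b` is the generator `Sum.inr ()`. -/
def syllable (i : ZMod r) : FreeGroup (A ⊕ Unit) :=
  signed (FreeGroup.of (Sum.inr ())) (ε i) * FreeGroup.map Sum.inl (w i)

/-- The product of the first `N` syllables, with indices in `ZMod r`. -/
def cyclicRelator : FreeGroup (A ⊕ Unit) := orbitProd (· + 1) (syllable ε w) N 0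

/-- The one-relator group defined by `cyclicRelator ε w N`. -/
abbrev CyclicRelatorGroup : Type _ := PresentedGroup {cyclicRelator ε w N}

/-- The defining quotient map of `CyclicRelatorGroup ε w N`. -/
abbrev CyclicRelatorGroup.mk : FreeGroup (A ⊕ Unit) →* CyclicRelatorGroup ε w N :=
  PresentedGroup.mk _

theorem CyclicRelatorGroup.mk_cyclicRelator : mk ε w N (cyclicRelator ε w N) = 1 :=
  PresentedGroup.one_of_mem rfl

theorem isPeriodicPt_add_one {N : ℕ} (hN : r ∣ N) (i : ZMod r) : IsPeriodicPt (· + 1) N i := by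
  rw [IsPeriodicPt, add_right_iterate, nsmul_one, (ZMod.natCast_eq_zero_iff N r).2 hN]
  exact add_zero i

theorem orbitProd_add_one_eq_one {M : Type*} [Monoid M] {f : ZMod r → M}
    (hf : orbitProd (· + 1) f r 0 = 1) {N : ℕ} (hN : r ∣ N) : orbitProd (· + 1) f N 0 = 1 := by
  obtain ⟨n, rfl⟩ := hN
  rw [Nat.mul_comm, orbitProd_of_isPeriodicPt_mul (isPeriodicPt_add_one dvd_rfl 0), hf, one_pow]

variable {ε w N}

theorem map_syllable {M : Type*} [Group M] (f : FreeGroup (A ⊕ Unit) →* M) (i : ZMod r) :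
    f (syllable ε w i) =
      signed (f (FreeGroup.of (Sum.inr ()))) (ε i) * f (FreeGroup.map Sum.inl (w i)) := by
  rw [syllable, map_mul, map_signed]

theorem CyclicRelatorGroup.exists_hom {M : Type*} [Group M] (j : FreeGroup A →* M) (b : M)
    (h : orbitProd (· + 1) (fun i => signed b (ε i) * j (w i)) N 0 = 1) :
    ∃ q : CyclicRelatorGroup ε w N →* M, q (mk ε w N (FreeGroup.of (Sum.inr ()))) = b ∧
      ∀ u, q (mk ε w N (FreeGroup.map Sum.inl u)) = j u := by
  let f : FreeGroup (A ⊕ Unit) →* M :=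
    FreeGroup.lift (Sum.elim (fun a => j (FreeGroup.of a)) fun _ => b)
  have hb : f (FreeGroup.of (Sum.inr ())) = b := FreeGroup.lift_apply_of
  have hj : f.comp (FreeGroup.map Sum.inl) = j := by
    ext a
    rw [MonoidHom.comp_apply, FreeGroup.map.of]
    exact FreeGroup.lift_apply_of
  have hrel : f (cyclicRelator ε w N) = 1 := by
    rw [cyclicRelator, map_orbitProd, ← h]
    refine congrArg (orbitProd _ · N 0) (funext fun i => ?_)
    rw [map_syllable, hb, ← hj, MonoidHom.comp_apply]
  exact ⟨PresentedGroup.toGroup fun u hu => mem_singleton_iff.1 hu ▸ hrel, hb,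
    fun u => DFunLike.congr_fun hj u⟩

/-- In the amalgam of `FreeGroup A` and `K × Q` identifying `w i` with `(x i, c i)`, the relation
holds for a suitable `b`; now retract the amalgam onto `K × Q` along the cosets of `K × Q`. -/
theorem exists_equivariant_of_orbitProd_eq_one [NeZero r] (hw : Injective (FreeGroup.lift w))
    (hN : r ∣ N) {Q : Type*} [Group Q] {c : ZMod r → Q} (hc : orbitProd (· + 1) c N 0 = 1) :
    ∃ κ : CyclicRelatorGroup ε w N → Q,
      (∀ g, κ (CyclicRelatorGroup.mk ε w N (FreeGroup.of (Sum.inr ())) * g) = κ g) ∧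
      ∀ i g, κ (CyclicRelatorGroup.mk ε w N (FreeGroup.map Sum.inl (w i)) * g) = c i * κ g := by
  obtain ⟨K, _, b, x, hx, hrel⟩ := exists_injective_lift_orbitProd_eq_one ε
  have hxc : Injective (FreeGroup.lift fun i => (x i, c i)) := by
    have hfst : (MonoidHom.fst K Q).comp (FreeGroup.lift fun i => (x i, c i)) =
        FreeGroup.lift x := by
      ext i
      simp only [MonoidHom.comp_apply, FreeGroup.lift_apply_of, MonoidHom.coe_fst]
    exact Injective.of_comp (f := MonoidHom.fst K Q) (by rwa [← MonoidHom.coe_comp, hfst])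
  obtain ⟨Γ, _, jF, jK, hjK, hcomp⟩ := exists_hom_comp_eq_hom_comp hw hxc
  have hjw (i : ZMod r) : jF (w i) = jK (x i, c i) := by
    simpa only [MonoidHom.comp_apply, FreeGroup.lift_apply_of] using
      DFunLike.congr_fun hcomp (FreeGroup.of i)
  have hΓ : orbitProd (· + 1) (fun i => signed (jK (b, 1)) (ε i) * jF (w i)) N 0 = 1 := by
    have hsyll (i : ZMod r) : signed (jK (b, 1)) (ε i) * jF (w i) =
        jK (signed b (ε i) * x i, c i) := by
      rw [hjw, ← map_signed, ← map_mul]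
      cases ε i <;> simp [signed]
    rw [funext hsyll, ← map_orbitProd]
    refine (congrArg jK (Prod.ext ?_ ?_)).trans (map_one jK)
    · exact (map_orbitProd (MonoidHom.fst K Q) _ _ _ _).trans (orbitProd_add_one_eq_one hrel hN)
    · exact (map_orbitProd (MonoidHom.snd K Q) _ _ _ _).trans hc
  obtain ⟨q, hqb, hqw⟩ := CyclicRelatorGroup.exists_hom jF (jK (b, 1)) hΓ
  obtain ⟨κ, hκ⟩ := exists_equivariant_retraction hjK
  refine ⟨fun g => (κ (q g)).2, fun g => ?_, fun i g => ?_⟩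
  · simp only [map_mul, hqb, hκ, Prod.snd_mul, one_mul]
  · simp only [map_mul, hqw, hjw, hκ, Prod.snd_mul]

end CyclicRelator

/-! ### The `2`-cells of a one-relator group -/

section RelatorComplex

open PolygonComplex Itinerary

variable {A : Type*} {r : ℕ} (ε : ZMod r → Bool) (w : ZMod r → FreeGroup A) {N : ℕ}
  {G : Type*} [Group G] (π : FreeGroup (A ⊕ Unit) →* G) {X : Type*} [MulAction G X]

/-- A `G`-set is regarded as a Schreier graph in which reading the word `u` from the vertex `x`
leads to `(π u)⁻¹ • x`, and the `b`-edge from `x` is identified with `x`. A side of type `i` runs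
through its `b`-edge in the direction `ε i`; it starts at `(edgeShift ε π i)⁻¹ • x`. -/
def edgeShift (i : ZMod r) : G := if ε i then 1 else π (FreeGroup.of (Sum.inr ()))

/-- The vertex at which a side of a polygon starts. -/
def sideStart (x : X × ZMod r) : X := (edgeShift ε π x.2)⁻¹ • x.1

/-- The next `b`-edge, after a side of type `i` through the `b`-edge `x`, on the boundary of a
`2`-cell spelling the cyclic relator. -/
def nextEdge (i : ZMod r) (x : X) : X :=
  edgeShift ε π (i + 1) • (π (syllable ε w i))⁻¹ • (edgeShift ε π i)⁻¹ • x

theorem sideStart_stepRot (x : X × ZMod r) : sideStart ε π (stepRot (nextEdge ε w π) x) =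
    (π (syllable ε w x.2))⁻¹ • sideStart ε π x := inv_smul_smul _ _

theorem sideStart_stepRot_iterate (m : ℕ) (x : X × ZMod r) :
    sideStart ε π ((stepRot (nextEdge ε w π))^[m] x) =
      (π (orbitProd (· + 1) (syllable ε w) m x.2))⁻¹ • sideStart ε π x := by
  induction m generalizing x with
  | zero => rw [iterate_zero_apply, orbitProd_zero, map_one, inv_one, one_smul]
  | succ m ih =>
    rw [iterate_succ_apply, ih, orbitProd_succ, map_mul, mul_inv_rev, mul_smul, sideStart_stepRot]
    rfl

theorem map_orbitProd_syllable_eq_one [NeZero r] {f : FreeGroup (A ⊕ Unit) →* G} (hN : r ∣ N)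
    (hf : f (cyclicRelator ε w N) = 1) (i : ZMod r) :
    f (orbitProd (· + 1) (syllable ε w) N i) = 1 := by
  rw [cyclicRelator, map_orbitProd] at hf
  have hi := orbitProd_iterate_eq_one (isPeriodicPt_add_one hN 0) hf i.val
  simp only [add_right_iterate, nsmul_one, ZMod.natCast_zmod_val, zero_add] at hi
  rw [map_orbitProd, hi]

variable {ε w π}

theorem isPeriodicPt_stepRot_nextEdge [NeZero r] (hN : r ∣ N)
    (hπ : π (cyclicRelator ε w N) = 1) (x : X × ZMod r) :
    IsPeriodicPt (stepRot (nextEdge ε w π)) N x := by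
  have hsnd : ((stepRot (nextEdge ε w π))^[N] x).2 = x.2 := by
    rw [snd_stepRot_iterate, (ZMod.natCast_eq_zero_iff N r).2 hN, add_zero]
  have hstart := sideStart_stepRot_iterate ε w π N x
  rw [map_orbitProd_syllable_eq_one ε w hN hπ, inv_one, one_smul, sideStart, hsnd] at hstart
  exact Prod.ext (MulAction.injective _ hstart) hsnd

theorem semiconj_nextEdge_smul (x₀ : X) (i : ZMod r) :
    Semiconj (· • x₀ : G → X) (nextEdge ε w π i) (nextEdge ε w π i) := fun g => by
  simp only [nextEdge, smul_eq_mul, mul_smul]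

theorem nextEdge_semiconj_of_equivariant {Q : Type*} [Group Q] {κ : G → Q} {c : ZMod r → Q}
    (hb : ∀ g, κ (π (FreeGroup.of (Sum.inr ())) * g) = κ g)
    (hκ : ∀ i g, κ (π (FreeGroup.map Sum.inl (w i)) * g) = c i * κ g) (i : ZMod r) :
    Semiconj κ (nextEdge ε w π i) ((c i)⁻¹ * ·) := fun g => by
  have hshift (i : ZMod r) (g : G) : κ (edgeShift ε π i * g) = κ g := by
    unfold edgeShift
    split_ifs
    · rw [one_mul]
    · exact hb g
  have hsigned (s : Bool) (g : G) :
      κ (signed (π (FreeGroup.of (Sum.inr ()))) s * g) = κ g := by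
    cases s
    · exact (hb _).symm.trans (congrArg κ (mul_inv_cancel_left _ g))
    · exact hb g
  let g' := (π (syllable ε w i))⁻¹ * ((edgeShift ε π i)⁻¹ * g)
  have hg : g = edgeShift ε π i * (π (syllable ε w i) * g') := by
    simp only [g', mul_inv_cancel_left]
  have hg' : κ g = c i * κ g' := by
    rw [hg, hshift, map_syllable, mul_assoc, hsigned, hκ]
  exact (hshift _ _).trans (eq_inv_mul_of_mul_eq hg'.symm)

variable {hN : r ∣ N}

variable (ε w) in
/-- The `b`-edges of a `G`-set, with the `2`-cells spelling the cyclic relator. -/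
abbrev relatorComplex [NeZero r] (X : Type*) [MulAction (CyclicRelatorGroup ε w N) X]
    (hN : r ∣ N) : PolygonComplex (X × ZMod r) X N :=
  stepComplex (nextEdge ε w (CyclicRelatorGroup.mk ε w N))
    (isPeriodicPt_stepRot_nextEdge hN (CyclicRelatorGroup.mk_cyclicRelator ε w N))

/-- The Cayley graph is mapped to a tree of polygons by an equivariant map. -/
theorem relatorComplex_isForest [NeZero r] [NeZero N] (hw : Injective (FreeGroup.lift w)) :
    ∃ depth par, (relatorComplex ε w (CyclicRelatorGroup ε w N) hN).IsForest depth par := by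
  obtain ⟨κ, hb, hκ⟩ := exists_equivariant_of_orbitProd_eq_one (ε := ε) hw hN
    (orbitProd_nextPerm_inv (ψ := ZMod.castHom hN (ZMod r)) 0)
  refine ⟨_, _, stepComplex_isForest (σ := fun g => κ g ⟨[], .nil⟩) (fun i g => ?_) _⟩
  have hnext := (nextEdge_semiconj_of_equivariant (ε := ε) hb hκ i).eq g
  rw [inv_inv] at hnext
  exact DFunLike.congr_fun hnext _

theorem exists_flatOn_relatorComplex [NeZero r] [NeZero N] (hw : Injective (FreeGroup.lift w))
    [MulAction (CyclicRelatorGroup ε w N) X] {x₀ : X} {Y : Set X}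
    (hY : (relatorComplex ε w X hN).PerimeterMinimal Y) {Γ : Type*} [Group Γ]
    {sign : CyclicRelatorGroup ε w N × ZMod r → Bool}
    {μ : CyclicRelatorGroup ε w N × ZMod r → Γ} {l : CyclicRelatorGroup ε w N → Γ}
    (hl : (relatorComplex ε w _ hN).FlatOn sign μ l ((· • x₀) ⁻¹' Y)) :
    ∃ l', EqOn l' l ((· • x₀) ⁻¹' Y) ∧ (relatorComplex ε w _ hN).FlatOn sign μ l' univ := by
  obtain ⟨depth, par, hforest⟩ := relatorComplex_isForest (hN := hN) hw
  exact (stepCovering _ _ (· • x₀) (semiconj_nextEdge_smul x₀)).exists_flatOn_univ hforest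
    (stepComplex_degreeLE _ (Nat.le_of_dvd (NeZero.pos N) hN)) hY hl

end RelatorComplex

/-! ### Closed paths and labels of paths -/

section LabelledGraph

variable {S X Γ : Type*} [Group Γ]

/-- In a graph whose edges are labelled by the generators in `S`, `e s x y` being the set of edges
from `x` to `y` labelled `s`, the word `u` can be read along a path from `x` to `y`. -/
inductive IsPath (e : S → X → X → Prop) : X → FreeGroup S → X → Prop
  | one (x) : IsPath e x 1 x
  | of {s x y} : e s x y → IsPath e x (FreeGroup.of s) y
  | mul {x y z u v} : IsPath e x u y → IsPath e y v z → IsPath e x (u * v) z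
  | inv {x y u} : IsPath e x u y → IsPath e y u⁻¹ x

variable {e e' : S → X → X → Prop}

theorem IsPath.mono (he : ∀ s x y, e s x y → e' s x y) {x y : X} {u : FreeGroup S}
    (hu : IsPath e x u y) : IsPath e' x u y := by
  induction hu with
  | one x => exact .one x
  | of h => exact .of (he _ _ _ h)
  | mul _ _ hu hv => exact hu.mul hv
  | inv _ hu => exact hu.inv

/-- The fundamental group of the graph at `x₀`, as a subgroup of the free group on the labels. -/
def closedPaths (e : S → X → X → Prop) (x₀ : X) : Subgroup (FreeGroup S) where
  carrier := {u | IsPath e x₀ u x₀}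
  one_mem' := .one x₀
  mul_mem' := .mul
  inv_mem' := .inv

/-- The vertex `x` lies in the component of `x₀`. -/
def Reachable (e : S → X → X → Prop) (x₀ x : X) : Prop := ∃ u, IsPath e x₀ u x

/-- A chosen path from `x₀` to `x`, a junk value if `x` is not reachable. -/
noncomputable def pathTo (e : S → X → X → Prop) (x₀ x : X) : FreeGroup S :=
  Classical.epsilon fun u => IsPath e x₀ u x

variable {x₀ x y z : X} {u v : FreeGroup S}

theorem Reachable.isPath_pathTo (hx : Reachable e x₀ x) : IsPath e x₀ (pathTo e x₀ x) x :=
  Classical.epsilon_spec hx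

theorem IsPath.reachable_iff (hu : IsPath e x u y) : Reachable e x₀ x ↔ Reachable e x₀ y :=
  ⟨fun ⟨_, hv⟩ => ⟨_, hv.mul hu⟩, fun ⟨_, hv⟩ => ⟨_, hv.mul hu.inv⟩⟩

theorem IsPath.pathTo_mul_mul_mem (hu : IsPath e x u y) (hx : Reachable e x₀ x) :
    pathTo e x₀ x * u * (pathTo e x₀ y)⁻¹ ∈ closedPaths e x₀ :=
  (hx.isPath_pathTo.mul hu).mul (hu.reachable_iff.1 hx).isPath_pathTo.inv

open Classical in
/-- The value of `ρ` on the path `u` from `x` to `y`, closed up by the chosen paths from `x₀`; it is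
`1` outside the component of `x₀`. -/
noncomputable def holonomy (ρ : closedPaths e x₀ →* Γ) (x : X) (u : FreeGroup S) (y : X) : Γ :=
  if h : Reachable e x₀ x ∧ IsPath e x u y then ρ ⟨_, h.2.pathTo_mul_mul_mem h.1⟩ else 1

variable (ρ : closedPaths e x₀ →* Γ)

theorem holonomy_of_reachable (hu : IsPath e x u y) (hx : Reachable e x₀ x) :
    holonomy ρ x u y = ρ ⟨_, hu.pathTo_mul_mul_mem hx⟩ := dif_pos ⟨hx, hu⟩

theorem holonomy_of_not_reachable (hx : ¬Reachable e x₀ x) : holonomy ρ x u y = 1 :=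
  dif_neg fun h => hx h.1

theorem holonomy_mul (hu : IsPath e x u y) (hv : IsPath e y v z) :
    holonomy ρ x (u * v) z = holonomy ρ x u y * holonomy ρ y v z := by
  by_cases hx : Reachable e x₀ x
  · have hy := hu.reachable_iff.1 hx
    rw [holonomy_of_reachable ρ hu hx, holonomy_of_reachable ρ hv hy,
      holonomy_of_reachable ρ (hu.mul hv) hx, ← map_mul]
    refine congrArg ρ (Subtype.ext ?_)
    simp only [Subgroup.coe_mul]
    group
  · have hy := mt hu.reachable_iff.2 hx
    rw [holonomy_of_not_reachable ρ hx, holonomy_of_not_reachable ρ hx,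
      holonomy_of_not_reachable ρ hy, one_mul]

theorem holonomy_one (x : X) : holonomy ρ x 1 x = 1 := by
  have hmul := holonomy_mul ρ (.one x) (.one x)
  rwa [one_mul, left_eq_mul] at hmul

theorem holonomy_inv (hu : IsPath e x u y) : holonomy ρ y u⁻¹ x = (holonomy ρ x u y)⁻¹ := by
  rw [eq_inv_iff_mul_eq_one, ← holonomy_mul ρ hu.inv hu, inv_mul_cancel, holonomy_one]

theorem holonomy_eq_one_iff (u : closedPaths e x₀) : holonomy ρ x₀ u x₀ = 1 ↔ ρ u = 1 := by
  have hx₀ : Reachable e x₀ x₀ := ⟨1, .one x₀⟩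
  let p : closedPaths e x₀ := ⟨pathTo e x₀ x₀, hx₀.isPath_pathTo⟩
  have hconj : holonomy ρ x₀ u x₀ = ρ p * ρ u * (ρ p)⁻¹ := by
    rw [holonomy_of_reachable ρ u.2 hx₀, ← map_mul, ← map_inv, ← map_mul]
    rfl
  rw [hconj, conj_eq_one_iff]

end LabelledGraph

section Label

variable {S T G Γ : Type*} [Group G] [Group Γ] (π : FreeGroup S →* G) (c : S → G → Γ)

/-- The homomorphism to the wreath product collecting, in its first component, the products of the
labels `c s g` along the paths in the Cayley graph, with the edge labelled `s` leading from `g` to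
`(π (of s))⁻¹ * g`. -/
def labelHom : FreeGroup S →* Γ ≀ᵣ G := FreeGroup.lift fun s => ⟨c s, π (FreeGroup.of s)⟩

/-- The product of the labels along the path from `g` spelling `u`. -/
def pathLabel (u : FreeGroup S) (g : G) : Γ := (labelHom π c u).left g

theorem labelHom_right (u : FreeGroup S) : (labelHom π c u).right = π u := by
  have hright : RegularWreathProduct.rightHom.comp (labelHom π c) = π := by
    ext s
    exact congrArg RegularWreathProduct.right FreeGroup.lift_apply_of
  exact DFunLike.congr_fun hright u

theorem pathLabel_one (g : G) : pathLabel π c 1 g = 1 := by rw [pathLabel, map_one]; rfl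

theorem pathLabel_of (s : S) (g : G) : pathLabel π c (FreeGroup.of s) g = c s g := by
  rw [pathLabel, labelHom, FreeGroup.lift_apply_of]

theorem pathLabel_mul (u v : FreeGroup S) (g : G) :
    pathLabel π c (u * v) g = pathLabel π c u g * pathLabel π c v ((π u)⁻¹ * g) := by
  rw [← labelHom_right π c, pathLabel, map_mul]
  rfl

theorem pathLabel_inv (u : FreeGroup S) (g : G) :
    pathLabel π c u⁻¹ ((π u)⁻¹ * g) = (pathLabel π c u g)⁻¹ := by
  rw [eq_inv_iff_mul_eq_one, mul_eq_one_comm, ← pathLabel_mul, mul_inv_cancel, pathLabel_one]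

theorem pathLabel_map (f : T → S) (u : FreeGroup T) (g : G) :
    pathLabel π c (FreeGroup.map f u) g = pathLabel (π.comp (FreeGroup.map f)) (c ∘ f) u g := by
  have hmap : (labelHom π c).comp (FreeGroup.map f) =
      labelHom (π.comp (FreeGroup.map f)) (c ∘ f) := by
    ext1 t
    simp only [labelHom, MonoidHom.comp_apply, FreeGroup.map.of, FreeGroup.lift_apply_of,
      comp_apply]
  rw [pathLabel, pathLabel, ← hmap, MonoidHom.comp_apply]

theorem labelHom_eq_one {u : FreeGroup S} (hπ : π u = 1) (h : ∀ g, pathLabel π c u g = 1) :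
    labelHom π c u = 1 :=
  RegularWreathProduct.ext (funext h) ((labelHom_right π c u).trans hπ)

end Label

section SchreierGraph

open PolygonComplex

variable {A : Type*} {r : ℕ} (ε : ZMod r → Bool) (w : ZMod r → FreeGroup A)
  {G : Type*} [Group G] (π : FreeGroup (A ⊕ Unit) →* G) {X : Type*} [MulAction G X]

/-- The Schreier graph of a `G`-set, with only those `b`-edges whose starting points are in `Y`. -/
def schreierEdge (Y : Set X) (s : A ⊕ Unit) (x y : X) : Prop :=
  y = (π (FreeGroup.of s))⁻¹ • x ∧ (s.isRight → x ∈ Y)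

variable {ε w π} {Y : Set X} {x y : X} {u : FreeGroup (A ⊕ Unit)}

theorem IsPath.mono_schreierEdge {Y' : Set X} (hu : IsPath (schreierEdge π Y) x u y)
    (hY : Y ⊆ Y') : IsPath (schreierEdge π Y') x u y :=
  hu.mono fun _ _ _ h => ⟨h.1, fun hs => hY (h.2 hs)⟩

theorem IsPath.eq_smul (hu : IsPath (schreierEdge π Y) x u y) : y = (π u)⁻¹ • x := by
  induction hu with
  | one x => rw [map_one, inv_one, one_smul]
  | of h => exact h.1
  | mul _ _ hu hv => rw [hv, hu, map_mul, mul_inv_rev, mul_smul]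
  | inv _ hu => rw [hu, map_inv, inv_inv, smul_inv_smul]

theorem isPath_map_inl (Y : Set X) (u : FreeGroup A) (x : X) :
    IsPath (schreierEdge π Y) x (FreeGroup.map Sum.inl u)
      ((π (FreeGroup.map Sum.inl u))⁻¹ • x) := by
  induction u using FreeGroup.induction_on generalizing x with
  | C1 => simpa only [map_one, inv_one, one_smul] using IsPath.one x
  | of a => exact .of ⟨rfl, nofun⟩
  | inv_of a ih =>
    simpa only [map_inv, inv_inv, inv_smul_smul]
      using (ih (π (FreeGroup.map Sum.inl (FreeGroup.of a)) • x)).inv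
  | mul u v hu hv => simpa only [map_mul, mul_inv_rev, mul_smul] using (hu x).mul (hv _)

theorem exists_finite_isPath (u : FreeGroup (A ⊕ Unit)) (x : X) :
    ∃ Y : Set X, Y.Finite ∧ IsPath (schreierEdge π Y) x u ((π u)⁻¹ • x) := by
  induction u using FreeGroup.induction_on generalizing x with
  | C1 => exact ⟨∅, finite_empty, by simpa only [map_one, inv_one, one_smul] using IsPath.one x⟩
  | of s => exact ⟨{x}, finite_singleton x, .of ⟨rfl, fun _ => rfl⟩⟩
  | inv_of s ih =>
    obtain ⟨Y, hY, hs⟩ := ih (π (FreeGroup.of s) • x)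
    exact ⟨Y, hY, by simpa only [map_inv, inv_inv, inv_smul_smul] using hs.inv⟩
  | mul u v hu hv =>
    obtain ⟨Y, hY, hu⟩ := hu x
    obtain ⟨Y', hY', hv⟩ := hv ((π u)⁻¹ • x)
    refine ⟨Y ∪ Y', hY.union hY', ?_⟩
    simpa only [map_mul, mul_inv_rev, mul_smul] using
      (hu.mono_schreierEdge subset_union_left).mul (hv.mono_schreierEdge subset_union_right)

theorem exists_finite_forall_isPath {F : Set (FreeGroup (A ⊕ Unit))} (hF : F.Finite) (x : X) :
    ∃ Y : Set X, Y.Finite ∧ ∀ u ∈ F, IsPath (schreierEdge π Y) x u ((π u)⁻¹ • x) := by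
  choose Y hY hpath using fun u : FreeGroup (A ⊕ Unit) => exists_finite_isPath (π := π) u x
  exact ⟨⋃ u ∈ F, Y u, hF.biUnion fun u _ => hY u,
    fun u hu => (hpath u).mono_schreierEdge (subset_biUnion_of_mem hu)⟩

theorem isPath_signed {x : X × ZMod r} (hx : x.1 ∈ Y) :
    IsPath (schreierEdge π Y) (sideStart ε π x)
      (signed (FreeGroup.of (Sum.inr ())) (ε x.2))
      ((signed (π (FreeGroup.of (Sum.inr ()))) (ε x.2))⁻¹ • sideStart ε π x) := by
  have hb : IsPath (schreierEdge π Y) x.1 (FreeGroup.of (Sum.inr ()))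
      ((π (FreeGroup.of (Sum.inr ())))⁻¹ • x.1) := .of ⟨rfl, fun _ => hx⟩
  unfold sideStart edgeShift
  cases ε x.2
  · simpa [signed] using hb.inv
  · simpa [signed] using hb

theorem isPath_syllable {x : X × ZMod r} (hx : x.1 ∈ Y) :
    IsPath (schreierEdge π Y) (sideStart ε π x) (syllable ε w x.2)
      (sideStart ε π (stepRot (nextEdge ε w π) x)) := by
  rw [sideStart_stepRot, map_syllable, mul_inv_rev, mul_smul]
  exact (isPath_signed hx).mul (isPath_map_inl Y _ _)

theorem isPath_orbitProd_syllable {x : X × ZMod r}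
    (hx : ∀ m, ((stepRot (nextEdge ε w π))^[m] x).1 ∈ Y) (m : ℕ) :
    IsPath (schreierEdge π Y) (sideStart ε π x) (orbitProd (· + 1) (syllable ε w) m x.2)
      (sideStart ε π ((stepRot (nextEdge ε w π))^[m] x)) := by
  induction m generalizing x with
  | zero => exact .one _
  | succ m ih => exact (isPath_syllable (hx 0)).mul (ih fun k => hx (k + 1))

section

variable {Γ : Type*} [Group Γ]

theorem pathLabel_eq_holonomy {x₀ : X} (ρ : closedPaths (schreierEdge π Y) x₀ →* Γ) {x₁ : X}
    {c : A ⊕ Unit → G → Γ}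
    (hc : ∀ s g, (s.isRight → g • x₁ ∈ Y) → c s g =
      holonomy ρ (g • x₁) (FreeGroup.of s) (((π (FreeGroup.of s))⁻¹ * g) • x₁))
    {g : G} (hu : IsPath (schreierEdge π Y) (g • x₁) u y) :
    pathLabel π c u g = holonomy ρ (g • x₁) u y := by
  obtain ⟨x, hx⟩ : ∃ x, x = g • x₁ := ⟨_, rfl⟩
  rw [← hx] at hu ⊢
  induction hu generalizing g with
  | one x => rw [pathLabel_one, holonomy_one]
  | of h => rw [pathLabel_of, hc _ _ (hx ▸ h.2), h.1, mul_smul, hx]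
  | mul hu hv ihu ihv =>
    rw [pathLabel_mul, holonomy_mul ρ hu hv, ihu hx,
      ihv (by rw [hu.eq_smul, hx, mul_smul])]
  | @inv x y u hu ih =>
    have hg : x = (π u * g) • x₁ := by rw [mul_smul, ← hx, hu.eq_smul, smul_inv_smul]
    have hinv := pathLabel_inv π c u (π u * g)
    rw [inv_mul_cancel_left] at hinv
    rw [hinv, ih hg, holonomy_inv ρ hu]

variable (ε w π) in
/-- The label of the subword `w i` of a side of type `i`. -/
def cornerLabel (ν : A → G → Γ) (x : G × ZMod r) : Γ :=
  pathLabel (π.comp (FreeGroup.map Sum.inl)) ν (w x.2)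
    ((signed (π (FreeGroup.of (Sum.inr ()))) (ε x.2))⁻¹ * sideStart ε π x)

variable {ν : A → G → Γ} {l : G → Γ}

theorem pathLabel_syllable (x : G × ZMod r) :
    pathLabel π (Sum.elim ν fun _ => l) (syllable ε w x.2) (sideStart ε π x) =
      signed (l x.1) (ε x.2) * cornerLabel ε w π ν x := by
  have hb (g : G) : pathLabel π (Sum.elim ν fun _ => l) (FreeGroup.of (Sum.inr ())) g = l g :=
    pathLabel_of _ _ _ _
  rw [syllable, pathLabel_mul, pathLabel_map, Sum.elim_comp_inl, map_signed]
  refine congrArg (· * cornerLabel ε w π ν x) ?_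
  unfold sideStart edgeShift
  cases ε x.2
  · exact (pathLabel_inv _ _ _ _).trans (congrArg _ (hb _))
  · simpa [signed] using hb x.1

theorem pathLabel_orbitProd_syllable (m : ℕ) (x : G × ZMod r) :
    pathLabel π (Sum.elim ν fun _ => l) (orbitProd (· + 1) (syllable ε w) m x.2)
        (sideStart ε π x) =
      orbitProd (stepRot (nextEdge ε w π))
        (fun x => signed (l x.1) (ε x.2) * cornerLabel ε w π ν x) m x := by
  induction m generalizing x with
  | zero => exact pathLabel_one _ _ _
  | succ m ih =>
    rw [orbitProd_succ, pathLabel_mul, pathLabel_syllable, orbitProd_succ, ← ih,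
      sideStart_stepRot]
    rfl

end

end SchreierGraph

section CellRelators

open PolygonComplex CyclicRelatorGroup

variable {A : Type*} {r : ℕ} [NeZero r] {ε : ZMod r → Bool} {w : ZMod r → FreeGroup A}
  {N : ℕ} (hN : r ∣ N) {X : Type*} [MulAction (CyclicRelatorGroup ε w N) X] (x₀ : X) {Y : Set X}

variable (ε w) in
theorem isPath_relator {x : X × ZMod r} (hx : (relatorComplex ε w X hN).Within Y x) :
    IsPath (schreierEdge (mk ε w N) Y) (sideStart ε (mk ε w N) x)
      (orbitProd (· + 1) (syllable ε w) N x.2) (sideStart ε (mk ε w N) x) := by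
  have hpath := isPath_orbitProd_syllable hx N
  rwa [isPeriodicPt_stepRot_nextEdge hN (mk_cyclicRelator ε w N) x] at hpath

variable (ε w N Y) in
/-- The boundary of the `2`-cell with side `x`, connected to `x₀` by a chosen path. -/
noncomputable def basedCell (x : X × ZMod r) : FreeGroup (A ⊕ Unit) :=
  let p := pathTo (schreierEdge (mk ε w N) Y) x₀ (sideStart ε (mk ε w N) x)
  p * orbitProd (· + 1) (syllable ε w) N x.2 * p⁻¹

variable (ε w Y) in
/-- The boundaries of the `2`-cells within `Y` in the component of `x₀`. -/
def cellRelators : Set (closedPaths (schreierEdge (mk ε w N) Y) x₀) :=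
  {z | ∃ x : X × ZMod r, (relatorComplex ε w X hN).Within Y x ∧
    Reachable (schreierEdge (mk ε w N) Y) x₀ (sideStart ε (mk ε w N) x) ∧
    z.1 = basedCell ε w N x₀ Y x}

theorem finite_cellRelators (hY : Y.Finite) : (cellRelators ε w hN x₀ Y).Finite := by
  refine Finite.of_finite_image (f := Subtype.val) ?_ Subtype.val_injective.injOn
  refine ((hY.prod finite_univ).image (basedCell ε w N x₀ Y)).subset ?_
  rintro _ ⟨z, ⟨x, hx, -, hz⟩, rfl⟩
  exact ⟨x, ⟨hx 0, mem_univ _⟩, hz.symm⟩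

theorem map_cellRelators {z : closedPaths (schreierEdge (mk ε w N) Y) x₀}
    (hz : z ∈ cellRelators ε w hN x₀ Y) : mk ε w N z = 1 := by
  obtain ⟨x, -, -, hz⟩ := hz
  rw [hz, basedCell, map_mul, map_mul,
    map_orbitProd_syllable_eq_one ε w hN (mk_cyclicRelator ε w N), mul_one, ← map_mul,
    mul_inv_cancel, map_one]

variable {x₀} {Γ : Type*} [Group Γ] {ρ : closedPaths (schreierEdge (mk ε w N) Y) x₀ →* Γ}

variable (ρ) in
/-- The holonomies of the edges, pulled back to the covering `CyclicRelatorGroup ε w N`. -/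
noncomputable def edgeHolonomy (s : A ⊕ Unit) (g : CyclicRelatorGroup ε w N) : Γ :=
  holonomy ρ (g • x₀) (FreeGroup.of s) (((mk ε w N (FreeGroup.of s))⁻¹ * g) • x₀)

variable (hρ : ∀ z ∈ cellRelators ε w hN x₀ Y, ρ z = 1)
include hρ

theorem flatOn_edgeHolonomy :
    (relatorComplex ε w _ hN).FlatOn (fun x => ε x.2)
      (cornerLabel ε w (mk ε w N) fun a => edgeHolonomy ρ (Sum.inl a))
      (edgeHolonomy ρ (Sum.inr ())) ((· • x₀) ⁻¹' Y) := fun x hx => by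
  let x' : X × ZMod r := (x.1 • x₀, x.2)
  have hx' : (relatorComplex ε w X hN).Within Y x' :=
    (stepCovering _ _ (· • x₀) (semiconj_nextEdge_smul x₀)).within_side_iff.2 hx
  have hstart : sideStart ε (mk ε w N) x' = sideStart ε (mk ε w N) x • x₀ := (mul_smul _ _ _).symm
  have hpath := isPath_relator ε w hN hx'
  have hlabel := pathLabel_eq_holonomy (g := sideStart ε (mk ε w N) x) ρ
    (c := Sum.elim (fun a => edgeHolonomy ρ (Sum.inl a)) fun _ => edgeHolonomy ρ (Sum.inr ()))
    (by rintro (a | ⟨⟩) g - <;> rfl) (hstart ▸ hpath)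
  rw [pathLabel_orbitProd_syllable] at hlabel
  refine hlabel.trans ?_
  rw [← hstart]
  by_cases hr : Reachable (schreierEdge (mk ε w N) Y) x₀ (sideStart ε (mk ε w N) x')
  · rw [holonomy_of_reachable ρ hpath hr]
    exact hρ _ ⟨x', hx', hr, rfl⟩
  · exact holonomy_of_not_reachable ρ hr

/-- The labels extend to a homomorphism from the one-relator group to a wreath product with `Γ`,
which therefore sees every closed path that is trivial in the one-relator group. -/
theorem eq_one_of_map_eq_one [NeZero N] (hw : Injective (FreeGroup.lift w))
    (hY : (relatorComplex ε w X hN).PerimeterMinimal Y)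
    {u : closedPaths (schreierEdge (mk ε w N) Y) x₀} (hu : mk ε w N u = 1) : ρ u = 1 := by
  obtain ⟨l, hl, hflat⟩ := exists_flatOn_relatorComplex hw hY (flatOn_edgeHolonomy hN hρ)
  let c : A ⊕ Unit → CyclicRelatorGroup ε w N → Γ := Sum.elim (fun a => edgeHolonomy ρ (Sum.inl a))
    fun _ => l
  have hrel : labelHom (mk ε w N) c (cyclicRelator ε w N) = 1 := by
    refine labelHom_eq_one _ _ (mk_cyclicRelator ε w N) fun g => ?_
    have hcell := pathLabel_orbitProd_syllable (π := mk ε w N) (w := w) (l := l)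
      (ε := ε) (ν := fun a => edgeHolonomy ρ (Sum.inl a)) N (edgeShift ε (mk ε w N) 0 * g, 0)
    rw [sideStart, smul_eq_mul, inv_mul_cancel_left] at hcell
    exact hcell.trans (hflat _ fun _ => mem_univ _)
  have hker : labelHom (mk ε w N) c u = 1 := by
    have hle : Subgroup.normalClosure {cyclicRelator ε w N} ≤ (labelHom (mk ε w N) c).ker :=
      Subgroup.normalClosure_le_normal (singleton_subset_iff.2 hrel)
    exact hle ((QuotientGroup.eq_one_iff _).1 hu)
  have hlabel := pathLabel_eq_holonomy (g := 1) (c := c) ρ (fun s g hg => by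
    rcases s with a | ⟨⟩
    · rfl
    · exact hl (hg rfl)) (y := x₀) (by rw [one_smul]; exact u.2)
  rw [pathLabel, hker, one_smul] at hlabel
  exact (holonomy_eq_one_iff ρ u).1 hlabel.symm

omit hρ in
theorem ker_closedPaths [NeZero N] (hw : Injective (FreeGroup.lift w))
    (hY : (relatorComplex ε w X hN).PerimeterMinimal Y) :
    ((mk ε w N).comp (closedPaths (schreierEdge (mk ε w N) Y) x₀).subtype).ker =
      Subgroup.normalClosure (cellRelators ε w hN x₀ Y) := by
  refine le_antisymm (fun u hu => ?_)
    (Subgroup.normalClosure_le_normal fun z hz => map_cellRelators hN x₀ hz)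
  refine (QuotientGroup.eq_one_iff u).1 (eq_one_of_map_eq_one hN
    (ρ := QuotientGroup.mk' (Subgroup.normalClosure (cellRelators ε w hN x₀ Y))) (fun z hz => ?_)
    hw hY hu)
  exact (QuotientGroup.eq_one_iff z).2 (Subgroup.subset_normalClosure hz)

end CellRelators

/-! ### Finite presentation and coherence -/

section FinitePresentation

open FreeGroup

theorem exists_finite_subset_closure_of {α : Type*} {F : Set (FreeGroup α)} (hF : F.Finite) :
    ∃ Z : Set α, Z.Finite ∧ F ⊆ Subgroup.closure (of '' Z) := by
  have hmono {Z Z' : Set α} (h : Z ⊆ Z') :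
      Subgroup.closure (of '' Z) ≤ Subgroup.closure (of '' Z') :=
    Subgroup.closure_mono (image_mono h)
  have hsingle (u : FreeGroup α) : ∃ Z : Set α, Z.Finite ∧ u ∈ Subgroup.closure (of '' Z) := by
    induction u using FreeGroup.induction_on with
    | C1 => exact ⟨∅, finite_empty, one_mem _⟩
    | of a => exact ⟨{a}, finite_singleton a, Subgroup.subset_closure ⟨a, rfl, rfl⟩⟩
    | inv_of a ih => exact ih.imp fun Z hZ => ⟨hZ.1, inv_mem hZ.2⟩
    | mul u v hu hv =>
      obtain ⟨Z, hZ, hu⟩ := hu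
      obtain ⟨Z', hZ', hv⟩ := hv
      exact ⟨Z ∪ Z', hZ.union hZ',
        mul_mem (hmono subset_union_left hu) (hmono subset_union_right hv)⟩
  choose Z hZ hmem using hsingle
  exact ⟨⋃ u ∈ F, Z u, hF.biUnion fun u _ => hZ u,
    fun u hu => hmono (subset_biUnion_of_mem hu) (hmem u)⟩

theorem isFinitelyPresented_of_surjective_of_retraction {F Λ L : Type*} [Group F] [Group Λ]
    [Group L] [Group.IsFinitelyPresented F] {f : Λ →* L} {i : F →* Λ} {ρ : Λ →* F}
    (hρ : ρ.comp i = MonoidHom.id F) (hf : Surjective (f.comp i)) {S : Set Λ} (hS : S.Finite)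
    (hSi : S ⊆ i.range) (hker : f.ker = Subgroup.normalClosure S) :
    Group.IsFinitelyPresented L := by
  have hρi (u : F) : ρ (i u) = u := DFunLike.congr_fun hρ u
  refine .of_surjective (f.comp i) hf ⟨ρ '' S, hS.image ρ, ?_⟩
  rw [← Subgroup.map_normalClosure S ρ fun u => ⟨i u, hρi u⟩, ← hker]
  refine le_antisymm ?_ fun u hu => ⟨i u, hu, hρi u⟩
  rw [hker, Subgroup.map_normalClosure S ρ fun u => ⟨i u, hρi u⟩]
  refine Subgroup.normalClosure_le_normal ?_
  rintro _ ⟨s, hs, rfl⟩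
  obtain ⟨u, rfl⟩ := hSi hs
  have hu : i u ∈ f.ker := hker ▸ Subgroup.subset_normalClosure hs
  rwa [hρi]

/-- Only finitely many letters occur in the relators and in a finite set of words generating `L`,
and the free group on these letters is a retract. -/
theorem isFinitelyPresented_of_surjective_freeGroup {α L : Type*} [Group L] [Group.FG L]
    {f : FreeGroup α →* L} (hf : Surjective f) (hker : f.ker.IsFinitelyNormallyGenerated) :
    Group.IsFinitelyPresented L := by
  classical
  obtain ⟨S, hS, hSker⟩ := hker
  obtain ⟨T, hT, hTfin⟩ := Group.fg_iff.1 ‹Group.FG L›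
  obtain ⟨Z, hZ, hsub⟩ := exists_finite_subset_closure_of (hS.union (hTfin.image (surjInv hf)))
  have hrange : (FreeGroup.map ((↑) : Z → α)).range = Subgroup.closure (of '' Z) := by
    rw [FreeGroup.range_map, Subtype.range_coe]
  rw [← hrange] at hsub
  have : Finite Z := hZ
  refine isFinitelyPresented_of_surjective_of_retraction (i := FreeGroup.map ((↑) : Z → α))
    (ρ := FreeGroup.lift fun a => if h : a ∈ Z then of ⟨a, h⟩ else 1) ?_ ?_ hS
    (subset_union_left.trans hsub) hSker.symm
  · ext a
    simp
  · rw [← MonoidHom.range_eq_top, ← top_le_iff, ← hT, Subgroup.closure_le]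
    intro t ht
    obtain ⟨u, hu⟩ := hsub (Or.inr ⟨t, ht, rfl⟩)
    exact ⟨u, (congrArg f hu).trans (surjInv_eq hf t)⟩

theorem isFinitelyPresented_of_surjective_isFreeGroup {Λ L : Type*} [Group Λ] [IsFreeGroup Λ]
    [Group L] [Group.FG L] {f : Λ →* L} (hf : Surjective f)
    (hker : f.ker.IsFinitelyNormallyGenerated) : Group.IsFinitelyPresented L := by
  let e := IsFreeGroup.toFreeGroup Λ
  refine isFinitelyPresented_of_surjective_freeGroup (f := f.comp e.symm.toMonoidHom)
    (hf.comp e.symm.surjective) ?_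
  rw [← MonoidHom.comap_ker]
  exact hker.comap e.symm.surjective (by
    rw [(MonoidHom.ker_eq_bot_iff _).2 e.symm.injective]
    exact .bot)

theorem finitelyPresentedGroup_of_isFinitelyPresented {G : Type*} [Group G]
    [Group.IsFinitelyPresented G] : FinitelyPresentedGroup G := by
  obtain ⟨n, s, hs, ⟨e⟩⟩ := Group.IsFinitelyPresented.exists_mulEquiv_presentedGroup (G := G)
  refine ⟨Fin n, inferInstance, hs.toFinset, ?_⟩
  rw [hs.coe_toFinset]
  exact ⟨e.symm⟩

theorem coherentGroup_of_isFreeGroup {G : Type*} [Group G] [IsFreeGroup G] :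
    CoherentGroup G := fun L hL => by
  have := (Group.fg_iff_subgroup_fg L).2 hL
  have : Group.IsFinitelyPresented L :=
    isFinitelyPresented_of_surjective_isFreeGroup (f := MonoidHom.id L) surjective_id
      (MonoidHom.ker_id (G := L) ▸ .bot)
  exact finitelyPresentedGroup_of_isFinitelyPresented

end FinitePresentation

section Coherence

open PolygonComplex CyclicRelatorGroup

theorem range_closedPaths_one {A G : Type*} [Group G] {π : FreeGroup (A ⊕ Unit) →* G}
    {L : Subgroup G} {F : Set (FreeGroup (A ⊕ Unit))} (hF : Subgroup.closure (π '' F) = L)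
    {Y : Set (G ⧸ L)}
    (hY : ∀ u ∈ F, IsPath (schreierEdge π Y) ((1 : G) : G ⧸ L) u ((π u)⁻¹ • ((1 : G) : G ⧸ L))) :
    (π.comp (closedPaths (schreierEdge π Y) ((1 : G) : G ⧸ L)).subtype).range = L := by
  have hfix (g : G) : g⁻¹ • ((1 : G) : G ⧸ L) = (1 : G) ↔ g ∈ L := by
    rw [← MulAction.mem_stabilizer_iff, MulAction.stabilizer_quotient, inv_mem_iff]
  refine le_antisymm ?_ ?_
  · rintro _ ⟨u, rfl⟩
    exact (hfix _).1 u.2.eq_smul.symm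
  · refine hF.ge.trans ((Subgroup.closure_le _).2 ?_)
    rintro _ ⟨u, hu, rfl⟩
    have hL : π u ∈ L := hF ▸ Subgroup.subset_closure ⟨u, hu, rfl⟩
    have hpath := hY u hu
    rw [(hfix _).2 hL] at hpath
    exact ⟨⟨u, hpath⟩, rfl⟩

theorem coherentGroup_cyclicRelatorGroup {A : Type*} {r : ℕ} [NeZero r] {N : ℕ} [NeZero N]
    (hN : r ∣ N) (ε : ZMod r → Bool) {w : ZMod r → FreeGroup A}
    (hw : Injective (FreeGroup.lift w)) : CoherentGroup (CyclicRelatorGroup ε w N) := fun L hL => by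
  let π := mk ε w N
  let x₀ : CyclicRelatorGroup ε w N ⧸ L := (1 : CyclicRelatorGroup ε w N)
  obtain ⟨T, hT, hTfin⟩ := (Subgroup.fg_iff L).1 hL
  have hπ : Surjective π := PresentedGroup.mk_surjective _
  obtain ⟨Y₀, hY₀, hpath⟩ := exists_finite_forall_isPath (π := π) (hTfin.image (surjInv hπ)) x₀
  obtain ⟨Y, hsub, hY⟩ :=
    (relatorComplex ε w (CyclicRelatorGroup ε w N ⧸ L) hN).exists_perimeterMinimal hY₀
  let f := π.comp (closedPaths (schreierEdge π Y) x₀).subtype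
  have hrange : f.range = L := by
    refine range_closedPaths_one (F := surjInv hπ '' T) ?_
      fun u hu => (hpath u hu).mono_schreierEdge hsub
    rwa [← image_comp, comp_surjInv, image_id]
  have hker : f.rangeRestrict.ker.IsFinitelyNormallyGenerated := by
    rw [MonoidHom.ker_rangeRestrict]
    exact ⟨_, finite_cellRelators hN x₀ hY.1, (ker_closedPaths hN hw hY).symm⟩
  have : IsFreeGroup (closedPaths (schreierEdge π Y) x₀) := subgroupIsFreeOfIsFree _
  have : Group.FG f.range := (Group.fg_iff_subgroup_fg _).2 (hrange.symm ▸ hL)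
  have hfp := isFinitelyPresented_of_surjective_isFreeGroup f.rangeRestrict_surjective hker
  rw [hrange] at hfp
  exact finitelyPresentedGroup_of_isFinitelyPresented

theorem orbitProd_eq_prod_ofFn {S M : Type*} [Monoid M] (τ : S → S) (f : S → M) (m : ℕ) (s : S) :
    orbitProd τ f m s = (List.ofFn fun i : Fin m => f (τ^[i] s)).prod := by
  induction m generalizing s with
  | zero => rfl
  | succ m ih =>
    rw [orbitProd_succ, ih, List.ofFn_succ, List.prod_cons]
    rfl

theorem cyclicRelator_mul {A : Type*} {r : ℕ} (ε : ZMod r → Bool) (w : ZMod r → FreeGroup A)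
    (n : ℕ) : cyclicRelator ε w (n * r) =
      (List.ofFn fun i : Fin r => syllable ε w (i : ℕ)).prod ^ n := by
  rw [cyclicRelator, orbitProd_of_isPeriodicPt_mul (isPeriodicPt_add_one dvd_rfl 0),
    orbitProd_eq_prod_ofFn]
  simp only [add_right_iterate, nsmul_one, zero_add]

theorem coherentGroup_presentedGroup_one {α : Type*} :
    CoherentGroup (PresentedGroup ({1} : Set (FreeGroup α))) := by
  have e : PresentedGroup ({1} : Set (FreeGroup α)) ≃* FreeGroup α :=
    (QuotientGroup.quotientMulEquivOfEq (Subgroup.normalClosure_eq_bot_iff.2 subset_rfl)).trans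
      QuotientGroup.quotientBot
  have := IsFreeGroup.ofMulEquiv e.symm
  exact coherentGroup_of_isFreeGroup

theorem one_relator_extreme_coherent_general {A : Type*} {r : ℕ} (ε : Fin r → Bool)
    {w : Fin r → FreeGroup A} (hw : Injective (FreeGroup.lift w)) (n : ℕ) :
    CoherentGroup (PresentedGroup {(List.ofFn fun i =>
      signed (FreeGroup.of (Sum.inr ())) (ε i) * FreeGroup.map Sum.inl (w i)).prod ^ n}) := by
  rcases r with _ | k
  · rw [List.ofFn_zero, List.prod_nil, one_pow]
    exact coherentGroup_presentedGroup_one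
  rcases n.eq_zero_or_pos with rfl | hn
  · rw [pow_zero]
    exact coherentGroup_presentedGroup_one
  have : NeZero (n * (k + 1)) := ⟨(Nat.mul_pos hn k.succ_pos).ne'⟩
  have hcast (i : Fin (k + 1)) : ((i : ℕ) : ZMod (k + 1)) = i := Fin.cast_val_eq_self i
  have hrel := cyclicRelator_mul (r := k + 1) ε w n
  simp only [hcast] at hrel
  exact hrel ▸ coherentGroup_cyclicRelatorGroup (r := k + 1) (dvd_mul_left _ n) ε hw

theorem mk_bWord {p r : ℕ} (ε : Fin r → Bool) (Wi : Fin r → List (Fin p × Bool)) :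
    FreeGroup.mk (bWord p r ε Wi) = (List.ofFn fun i =>
      signed (FreeGroup.of (Sum.inr ())) (ε i) *
        FreeGroup.map Sum.inl (FreeGroup.mk (Wi i))).prod := by
  have hflatten (ls : List (List ((Fin p ⊕ Unit) × Bool))) :
      FreeGroup.mk ls.flatten = (ls.map FreeGroup.mk).prod := by
    induction ls with
    | nil => rfl
    | cons u ls ih => rw [List.flatten_cons, ← FreeGroup.mul_mk, ih, List.map_cons, List.prod_cons]
  rw [bWord, hflatten, List.map_map, List.ofFn_eq_map]
  refine congrArg List.prod (List.map_congr_left fun i _ => ?_)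
  rw [comp_apply, ← mk_singleton_eq_signed, FreeGroup.map.mk, FreeGroup.mul_mk]
  rfl

end Coherence

/-- **Theorem `thm:1rel-extreme` (coherence part).**  The one-relator group
`G = ⟨a₁, …, a_p, b ∣ (b^{ε₁} W₁ ⋯ b^{ε_r} W_r)^n⟩`, where each `εᵢ = ±1` and the `Wᵢ`
are nonempty reduced words in the `aᵢ` freely generating a subgroup of the free group
on `a₁, …, a_p`, is coherent. -/
theorem one_relator_extreme_coherent
    (p r n : ℕ) (hp : 1 ≤ p) (hr : 1 ≤ r) (hn : 1 ≤ n)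
    (ε : Fin r → Bool)
    (Wi : Fin r → List (Fin p × Bool))
    (hne : ∀ i, Wi i ≠ []) (hred : ∀ i, WordReduced (Wi i))
    (hfree : Function.Injective
      (FreeGroup.lift (fun i : Fin r => FreeGroup.mk (Wi i)) :
        FreeGroup (Fin r) →* FreeGroup (Fin p))) :
    CoherentGroup (PresentedGroup
      ({FreeGroup.mk (bWord p r ε Wi) ^ n} : Set (FreeGroup (Fin p ⊕ Unit)))) := by
  rw [mk_bWord]
  exact one_relator_extreme_coherent_general ε hfree n
end

section
/- (Freiheitssatz for staggered presentations.) Let X be a set, let A ⊆ X, and let w_1, …, w_m be nonempty reduced, cyclically reduced words over X such that each w_j contains at least one occurrence of a letter of X ∖ A. Suppose there is a linear order on X ∖ A such that, writing M_j (respectively m_j) for the largest (respectively smallest) element of X ∖ A occurring in w_j, one has: for all i < j, M_i < M_j and m_i < m_j (so the presentation ⟨X ∣ w_1, …, w_m⟩ is staggered over A with the relators ordered by their indices). Let G = ⟨X ∣ w_1, …, w_m⟩. Then the homomorphism from the free group on A to G induced by the inclusion A ↪ X is injective. -/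
/-- A word is *cyclically reduced* if it is reduced and, in addition, its last letter
is not the inverse of its first letter. -/
def WordCyclicallyReduced {α : Type*} (w : List (α × Bool)) : Prop :=
  WordReduced w ∧
    ∀ x ∈ w.getLast?, ∀ y ∈ w.head?, ¬(x.1 = (y : α × Bool).1 ∧ x.2 = !y.2)

/-- The letter `x` *occurs* in the word `w` if `w` contains `(x, +1)` or `(x, -1)`. -/
def OccursIn {α : Type*} (x : α) (w : List (α × Bool)) : Prop :=
  ∃ e : Bool, (x, e) ∈ w

/-!
The words are added one at a time, and each step is an amalgamated product: if the relators split
into two sets, one over the letters `L` and one over the letters `R`, and the letters in `L ∩ R`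
are free modulo each of the two sets, then the two presented groups embed in their amalgamated
product over the free group on `L ∩ R`. For a staggered presentation the extreme letters of the
words keep `L ∩ R` free on both sides, provided that each single word satisfies the Freiheitssatz
for its largest and its smallest letter.

It remains to prove Magnus's one-relator Freiheitssatz: the letters other than a letter `x` of a
cyclically reduced word `w` are free modulo `w`. If the exponent sum of `x` in `w` is nonzero, the
equation obtained from `w` by substituting elements of a finite `p`-group for the other letters can
be solved for `x` in that `p`-group, for almost all primes `p`; since free groups are residually
finite-`p`, no nontrivial element in the other letters is killed by `w`. If the exponent sum is
zero, rewrite `w` in terms of the conjugates `x ^ l * y * x ^ (-l)`. The conjugates of `w` by the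
powers of `x` become shorter words forming a staggered family indexed by `ℤ`, to which the
induction hypothesis and the amalgamation argument apply.
-/

open FreeGroup (of)
open Subgroup

universe u v

/-- The letter subgroup (Magnus subgroup) of the free group on `X` generated by the letters in
`S`. -/
def letterSubgroup {X : Type*} (S : Set X) : Subgroup (FreeGroup X) :=
  closure (of '' S)

/-- The letters in `S` freely generate a free subgroup of `⟨X ∣ R⟩`: the letter subgroup of `S`
maps injectively to the presented group. This is the conclusion of every form of the
Freiheitssatz. -/
def FreeModulo {X : Type*} (S : Set X) (R : Set (FreeGroup X)) : Prop :=
  Disjoint (letterSubgroup S) (normalClosure R)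

section LetterSubgroup

variable {X : Type*} {S T : Set X} {R : Set (FreeGroup X)} {w : List (X × Bool)}

theorem of_mem_letterSubgroup {x : X} (hx : x ∈ S) : of x ∈ letterSubgroup S :=
  subset_closure (Set.mem_image_of_mem of hx)

theorem letterSubgroup_mono (h : S ⊆ T) : letterSubgroup S ≤ letterSubgroup T :=
  closure_mono (Set.image_mono h)

theorem eqOn_letterSubgroup {G : Type*} [Group G] {f g : FreeGroup X →* G}
    (h : ∀ x ∈ S, f (of x) = g (of x)) : Set.EqOn f g (letterSubgroup S) :=
  MonoidHom.eqOn_closure (Set.forall_mem_image.2 h)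

theorem freeGroup_mk_cons (p : X × Bool) (w : List (X × Bool)) :
    FreeGroup.mk (p :: w) = FreeGroup.mk [p] * FreeGroup.mk w :=
  FreeGroup.mul_mk (L₁ := [p]).symm

theorem mk_mem_letterSubgroup (h : ∀ x, OccursIn x w → x ∈ S) :
    FreeGroup.mk w ∈ letterSubgroup S := by
  induction w with
  | nil => exact one_mem _
  | cons p w ih =>
    rw [freeGroup_mk_cons]
    refine mul_mem ?_ (ih fun x ⟨e, he⟩ => h x ⟨e, List.mem_cons_of_mem _ he⟩)
    obtain ⟨x, e⟩ := p
    have hx : of x ∈ letterSubgroup S := of_mem_letterSubgroup (h x ⟨e, List.mem_cons_self⟩)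
    cases e
    · exact inv_mem hx
    · exact hx

theorem map_mem_letterSubgroup {Y : Type*} {f : Y → X} (h : ∀ y, f y ∈ S) (g : FreeGroup Y) :
    FreeGroup.map f g ∈ letterSubgroup S :=
  letterSubgroup_mono (Set.range_subset_iff.2 h) (FreeGroup.range_map.le ⟨g, rfl⟩)

theorem FreeModulo.mono (h : S ⊆ T) (hT : FreeModulo T R) : FreeModulo S R :=
  Disjoint.mono_left (letterSubgroup_mono h) hT

theorem FreeModulo.empty (S : Set X) : FreeModulo S ∅ := by
  rw [FreeModulo, normalClosure_empty]
  exact disjoint_bot_right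

theorem FreeModulo.injective_lift_of (h : FreeModulo S R) :
    Function.Injective (FreeGroup.lift fun a : S => (PresentedGroup.of (a : X) :
      PresentedGroup R)) := by
  have hcomp : (FreeGroup.lift fun a : S => (PresentedGroup.of (a : X) : PresentedGroup R)) =
      (PresentedGroup.mk R).comp (FreeGroup.map Subtype.val) := by
    ext a
    simp [PresentedGroup.of]
  rw [hcomp, injective_iff_map_eq_one]
  intro g hg
  refine FreeGroup.map_injective Subtype.val_injective ?_
  rw [map_one]
  exact disjoint_def.1 h (map_mem_letterSubgroup Subtype.prop g) (PresentedGroup.mk_eq_one_iff.1 hg)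

end LetterSubgroup

section Amalgam

/- The common group is the amalgamated product over `H` of the quotients `G ⧸ N i`. -/
theorem exists_monoidHom_ker_eq_eqOn {ι : Type v} {G : Type u} [Group G] (H : Subgroup G)
    (N : ι → Subgroup G) [∀ i, (N i).Normal] (hN : ∀ i, Disjoint H (N i)) :
    ∃ (P : Type (max u v)) (_ : Group P) (f : ι → G →* P),
      (∀ i, (f i).ker = N i) ∧ ∀ i j, Set.EqOn (f i) (f j) H := by
  let φ (i : ι) : H →* G ⧸ N i := (QuotientGroup.mk' (N i)).comp H.subtype
  have hφ (i : ι) : Function.Injective (φ i) := by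
    rw [injective_iff_map_eq_one]
    rintro ⟨a, ha⟩ h
    exact Subtype.ext (disjoint_def.1 (hN i) ha ((QuotientGroup.eq_one_iff a).1 h))
  refine ⟨Monoid.PushoutI φ, inferInstance,
    fun i => (Monoid.PushoutI.of i).comp (QuotientGroup.mk' (N i)), fun i => ?_, fun i j a ha => ?_⟩
  · rw [MonoidHom.ker_comp_of_injective _ _ (Monoid.PushoutI.of_injective hφ i)]
    exact QuotientGroup.ker_mk' (N i)
  · exact (Monoid.PushoutI.of_apply_eq_base φ i ⟨a, ha⟩).trans
      (Monoid.PushoutI.of_apply_eq_base φ j ⟨a, ha⟩).symm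

variable {X : Type*} {L R : Set X} {RL RR : Set (FreeGroup X)}

/- `⟨X ∣ RL ∪ RR⟩` maps to the amalgamated product of `⟨X ∣ RL⟩` and `⟨X ∣ RR⟩` over the letters in
`L ∩ R`, sending letters in `L` to the first factor and all the others to the second one. -/
theorem mem_normalClosure_of_mem_normalClosure_union {g : FreeGroup X}
    (hRL : RL ⊆ letterSubgroup L) (hRR : RR ⊆ letterSubgroup R)
    (hL : FreeModulo (L ∩ R) RL) (hR : FreeModulo (L ∩ R) RR) (hgR : g ∈ letterSubgroup R)
    (hg : g ∈ normalClosure (RL ∪ RR)) : g ∈ normalClosure RR := by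
  classical
  let N (b : Bool) : Subgroup (FreeGroup X) := normalClosure (cond b RL RR)
  have (b : Bool) : (N b).Normal := normalClosure_normal
  obtain ⟨P, _, f, hker, heq⟩ := exists_monoidHom_ker_eq_eqOn (letterSubgroup (L ∩ R)) N
    (Bool.forall_bool.2 ⟨hR, hL⟩)
  let F : FreeGroup X →* P := FreeGroup.lift fun x => f (decide (x ∈ L)) (of x)
  have hFL : Set.EqOn F (f true) (letterSubgroup L) :=
    eqOn_letterSubgroup fun x hx => by simp [F, hx]
  have hFR : Set.EqOn F (f false) (letterSubgroup R) := by
    refine eqOn_letterSubgroup fun x hx => ?_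
    by_cases hxL : x ∈ L
    · simpa [F, hxL] using heq true false (of_mem_letterSubgroup ⟨hxL, hx⟩)
    · simp [F, hxL]
  have hF : normalClosure (RL ∪ RR) ≤ F.ker := by
    refine normalClosure_le_normal (Set.union_subset (fun r hr => ?_) fun r hr => ?_)
    · have : r ∈ (f true).ker := (hker true).ge (subset_normalClosure hr)
      exact (hFL (hRL hr)).trans this
    · have : r ∈ (f false).ker := (hker false).ge (subset_normalClosure hr)
      exact (hFR (hRR hr)).trans this
  exact (hker false).le ((hFR hgR).symm.trans (hF hg))

theorem FreeModulo.union {T : Set X} (hTR : T ⊆ R) (hRL : RL ⊆ letterSubgroup L)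
    (hRR : RR ⊆ letterSubgroup R) (hL : FreeModulo (L ∩ R) RL) (hR : FreeModulo (L ∩ R) RR)
    (hT : FreeModulo T RR) : FreeModulo T (RL ∪ RR) :=
  disjoint_def.2 fun {_} hgT hg => disjoint_def.1 hT hgT <|
    mem_normalClosure_of_mem_normalClosure_union hRL hRR hL hR (letterSubgroup_mono hTR hgT) hg

end Amalgam

section FiniteSubfamily

theorem exists_finset_mem_normalClosure_image {ι G : Type*} [Group G] {r : ι → G} {g : G}
    (hg : g ∈ normalClosure (Set.range r)) : ∃ F : Finset ι, g ∈ normalClosure (r '' F) := by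
  have hdir : Directed (· ≤ ·) fun F : Finset ι => normalClosure (r '' F) :=
    Monotone.directed_le fun _ _ h => normalClosure_mono (Set.image_mono (Finset.coe_subset.2 h))
  have hle : normalClosure (Set.range r) ≤ ⨆ F : Finset ι, normalClosure (r '' F) := by
    refine normalClosure_le_normal (Set.range_subset_iff.2 fun i => ?_)
    exact mem_iSup_of_mem {i} (subset_normalClosure (by simp))
  exact (mem_iSup_of_directed hdir).1 (hle hg)

theorem FreeModulo.range_of_forall_finset {X ι : Type*} {S : Set X} {r : ι → FreeGroup X}
    (h : ∀ F : Finset ι, FreeModulo S (r '' F)) : FreeModulo S (Set.range r) := by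
  refine disjoint_def.2 fun {g} hgS hg => ?_
  obtain ⟨F, hF⟩ := exists_finset_mem_normalClosure_image hg
  exact disjoint_def.1 (h F) hgS hF

end FiniteSubfamily

/-- A family of words, each with a chosen *top* and *bottom* letter, which is staggered: the top
letter of a word does not occur in the words before it, the bottom letter does not occur in the
words after it, and every single word satisfies the Freiheitssatz for these two letters. Phrasing
the latter as a hypothesis allows the induction in the one-relator Freiheitssatz to run through
staggered families. -/
structure IsStaggered {X ι : Type*} [LinearOrder ι] (w : ι → List (X × Bool))
    (top bot : ι → X) : Prop where
  freeModulo_top : ∀ i, FreeModulo {top i}ᶜ {FreeGroup.mk (w i)}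
  freeModulo_bot : ∀ i, FreeModulo {bot i}ᶜ {FreeGroup.mk (w i)}
  not_occursIn_top : ∀ ⦃i j⦄, i < j → ¬OccursIn (top j) (w i)
  not_occursIn_bot : ∀ ⦃i j⦄, i < j → ¬OccursIn (bot i) (w j)

namespace IsStaggered

variable {X ι : Type*} [LinearOrder ι] {w : ι → List (X × Bool)} {top bot : ι → X} {T : Set X}

theorem dual (h : IsStaggered w top bot) :
    IsStaggered (w ∘ OrderDual.ofDual) (bot ∘ OrderDual.ofDual) (top ∘ OrderDual.ofDual) where
  freeModulo_top i := h.freeModulo_bot i.ofDual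
  freeModulo_bot i := h.freeModulo_top i.ofDual
  not_occursIn_top _ _ hij := h.not_occursIn_bot hij
  not_occursIn_bot _ _ hij := h.not_occursIn_top hij

/- The last relator is split off: its letters other than its top letter are separated from the
earlier relators by the letters different from that top letter. -/
theorem freeModulo_image_of_bot_notMem (h : IsStaggered w top bot) (F : Finset ι)
    (hT : ∀ i ∈ F, bot i ∉ T) : FreeModulo T ((fun i => FreeGroup.mk (w i)) '' F) := by
  classical
  induction F using Finset.induction_on_max generalizing T with
  | empty => simpa using FreeModulo.empty T
  | insert j F hF ih =>
    rw [Finset.coe_insert, Set.image_insert_eq, Set.insert_eq, Set.union_comm]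
    refine FreeModulo.union (L := {top j}ᶜ) (R := {x | OccursIn x (w j)} ∪ T)
      Set.subset_union_right (Set.image_subset_iff.2 fun i hi => ?_)
      (Set.singleton_subset_iff.2 ?_) (ih fun i hi => ?_) ?_ ?_
    · refine mk_mem_letterSubgroup fun x hx => ?_
      rintro rfl
      exact h.not_occursIn_top (hF i hi) hx
    · exact mk_mem_letterSubgroup fun x => Or.inl
    · rintro ⟨-, hocc | hiT⟩
      · exact h.not_occursIn_bot (hF i hi) hocc
      · exact hT i (Finset.mem_insert_of_mem hi) hiT
    · exact (h.freeModulo_top j).mono Set.inter_subset_left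
    · exact (h.freeModulo_bot j).mono
        (Set.subset_compl_singleton_iff.2 (hT j (Finset.mem_insert_self j F)))

theorem freeModulo_image_of_top_notMem (h : IsStaggered w top bot) (F : Finset ι)
    (hT : ∀ i ∈ F, top i ∉ T) : FreeModulo T ((fun i => FreeGroup.mk (w i)) '' F) :=
  h.dual.freeModulo_image_of_bot_notMem F hT

theorem freeModulo_range (h : IsStaggered w top bot) {S : Set ι} (hS : IsLowerSet S)
    (hbot : ∀ i ∈ S, bot i ∉ T) (htop : ∀ i ∉ S, top i ∉ T) :
    FreeModulo T (Set.range fun i => FreeGroup.mk (w i)) := by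
  classical
  refine FreeModulo.range_of_forall_finset fun F => ?_
  let supp (E : Finset ι) : Set X := {x | ∃ i ∈ E, OccursIn x (w i)}
  have hsupp (E : Finset ι) :
      (fun i => FreeGroup.mk (w i)) '' E ⊆ letterSubgroup (supp E ∪ T) :=
    Set.image_subset_iff.2 fun i hi => mk_mem_letterSubgroup fun x hx => Or.inl ⟨i, hi, hx⟩
  have hlt {i j : ι} (hi : i ∈ S) (hj : j ∉ S) : i < j := lt_of_not_ge fun hji => hj (hS hji hi)
  rw [← F.filter_union_filter_not_eq (· ∈ S), Finset.coe_union, Set.image_union]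
  refine FreeModulo.union Set.subset_union_right (hsupp _) (hsupp _)
    (h.freeModulo_image_of_bot_notMem _ ?_) (h.freeModulo_image_of_top_notMem _ ?_)
    (h.freeModulo_image_of_top_notMem _ fun i hi => htop i (Finset.mem_filter.1 hi).2)
  · rintro i hi ⟨-, ⟨j, hj, hij⟩ | hiT⟩
    · exact h.not_occursIn_bot (hlt (Finset.mem_filter.1 hi).2 (Finset.mem_filter.1 hj).2) hij
    · exact hbot i (Finset.mem_filter.1 hi).2 hiT
  · rintro i hi ⟨⟨j, hj, hij⟩ | hiT, -⟩
    · exact h.not_occursIn_top (hlt (Finset.mem_filter.1 hj).2 (Finset.mem_filter.1 hi).2) hij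
    · exact htop i (Finset.mem_filter.1 hi).2 hiT

end IsStaggered

section Unitriangular

variable {m R : Type*} [Fintype m] [LinearOrder m] [CommRing R]

variable (m R) in
/-- The monoid of upper unitriangular matrices. -/
def unitriangular : Submonoid (Matrix m m R) where
  carrier := {M | M.IsUpperTriangular ∧ ∀ i, M i i = 1}
  one_mem' := ⟨Matrix.blockTriangular_one, Matrix.one_apply_eq⟩
  mul_mem' := by
    rintro M N ⟨hM, hM1⟩ ⟨hN, hN1⟩
    refine ⟨hM.mul hN, fun i => ?_⟩
    rw [Matrix.mul_apply, Finset.sum_eq_single i, hM1, hN1, one_mul]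
    · intro j _ hji
      rcases hji.lt_or_gt with h | h
      · rw [hM h, zero_mul]
      · rw [hN h, mul_zero]
    · simp

theorem sub_one_pow_card_of_mem_unitriangular {M : Matrix m m R} (hM : M ∈ unitriangular m R) :
    (M - 1) ^ Fintype.card m = 0 := by
  have h := M.aeval_self_charpoly
  rw [Matrix.charpoly_of_isUpperTriangular M hM.1] at h
  simpa [hM.2] using h

theorem isPGroup_units_unitriangular (p : ℕ) [Fact p.Prime] :
    IsPGroup p (unitriangular m (ZMod p))ˣ := by
  intro u
  refine ⟨Fintype.card m, Units.ext (Subtype.ext ?_)⟩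
  cases isEmpty_or_nonempty m
  · exact Subsingleton.elim _ _
  have h := sub_pow_char_pow_of_commute p (Fintype.card m)
    (Commute.one_right (u : Matrix m m (ZMod p)))
  have hle : Fintype.card m ≤ p ^ Fintype.card m :=
    (Nat.lt_pow_self (Fact.out : p.Prime).one_lt).le
  rw [pow_eq_zero_of_le hle (sub_one_pow_card_of_mem_unitriangular u.1.2), one_pow] at h
  exact sub_eq_zero.1 h.symm

theorem one_add_mem_unitriangular {N : Matrix m m R} (hN : ∀ i j, j ≤ i → N i j = 0) :
    1 + N ∈ unitriangular m R :=
  ⟨Matrix.blockTriangular_one.add fun i j h => hN i j h.le, fun i => by simp [hN i i le_rfl]⟩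

/-- The one-parameter group `e ↦ 1 + e • N` of unitriangular matrices attached to a strictly upper
triangular matrix `N` of square zero. -/
def oneParameterHom (N : Matrix m m R) (hN : ∀ i j, j ≤ i → N i j = 0) (hN2 : N * N = 0) :
    Multiplicative ℤ →* unitriangular m R where
  toFun e := ⟨1 + e.toAdd • N, one_add_mem_unitriangular fun i j h => by simp [hN i j h]⟩
  map_one' := by simp
  map_mul' a b := by
    refine Subtype.ext ?_
    simp [-zsmul_eq_mul, add_mul, mul_add, hN2, add_smul, add_assoc]

end Unitriangular

section SuperdiagonalProduct

variable {n : ℕ} {R : Type*} [CommRing R]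

theorem list_prod_apply_eq_zero {L : List (Matrix (Fin n) (Fin n) R)}
    (hL : ∀ B ∈ L, ∀ i j : Fin n, (i : ℕ) + 1 < j → B i j = 0) {i j : Fin n}
    (hij : (i : ℕ) + L.length < j) : L.prod i j = 0 := by
  induction L generalizing i with
  | nil => exact Matrix.one_apply_ne (Fin.ne_of_lt hij)
  | cons B L ih =>
    rw [List.prod_cons, Matrix.mul_apply]
    refine Finset.sum_eq_zero fun k _ => ?_
    rw [List.length_cons] at hij
    rcases le_or_gt (k : ℕ) (i + 1) with hk | hk
    · rw [ih (fun C hC => hL C (List.mem_cons_of_mem _ hC)) (by omega), mul_zero]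
    · rw [hL B List.mem_cons_self i k hk, zero_mul]

/- The only path of `L.length` steps of size at most one from `i` to `i + L.length` is along the
superdiagonal. -/
theorem list_prod_apply_of_add_length_eq {L : List (Matrix (Fin n) (Fin n) R)}
    (hL : ∀ B ∈ L, ∀ i j : Fin n, (i : ℕ) + 1 < j → B i j = 0) {i j : Fin n}
    (hij : (i : ℕ) + L.length = j) :
    L.prod i j = ∏ k : Fin L.length, L[k] ⟨i + k, by omega⟩ ⟨i + k + 1, by omega⟩ := by
  induction L generalizing i with
  | nil =>
    obtain rfl : i = j := Fin.ext hij
    exact Matrix.one_apply_eq i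
  | cons B L ih =>
    have hL' : ∀ C ∈ L, ∀ i j : Fin n, (i : ℕ) + 1 < j → C i j = 0 := fun C hC =>
      hL C (List.mem_cons_of_mem _ hC)
    rw [List.length_cons] at hij
    have hi : (i : ℕ) + 1 < n := by omega
    rw [List.prod_cons, Matrix.mul_apply, Finset.sum_eq_single ⟨i + 1, hi⟩,
      ih hL' (by simp only; omega)]
    · refine Eq.trans ?_ (Fin.prod_univ_succ (n := L.length) _).symm
      refine congrArg (B i ⟨i + 1, hi⟩ * ·) (Fintype.prod_congr _ _ fun k => ?_)
      simp [add_assoc, add_comm 1]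
    · intro k _ hk
      rcases lt_or_gt_of_ne (Fin.val_ne_of_ne hk) with h | h
      · rw [list_prod_apply_eq_zero hL' (by simp only at h; omega), mul_zero]
      · rw [hL B List.mem_cons_self i k h, zero_mul]
    · simp

end SuperdiagonalProduct

section Residual

variable {X : Type*}

theorem exists_syllables (g : FreeGroup X) : ∃ l : List (X × ℤ),
    l.IsChain (fun p q => p.1 ≠ q.1) ∧ (∀ p ∈ l, p.2 ≠ 0) ∧
      g = (l.map fun p => of p.1 ^ p.2).prod := by
  classical
  let W := Monoid.CoprodI.Word.equiv (freeGroupEquivCoprodI g)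
  let e (p : Σ _ : X, FreeGroup Unit) : X × ℤ := (p.1, FreeGroup.freeGroupUnitEquivInt p.2)
  have hzpow (u : FreeGroup Unit) : of () ^ FreeGroup.freeGroupUnitEquivInt u = u :=
    FreeGroup.freeGroupUnitEquivInt.symm_apply_apply u
  refine ⟨W.toList.map e, (List.isChain_map e).2 W.chain_ne, List.forall_mem_map.2 fun p hp h => ?_,
    ?_⟩
  · refine W.ne_one p hp ?_
    rw [← hzpow p.2, show FreeGroup.freeGroupUnitEquivInt p.2 = 0 from h, zpow_zero]
  · have hW : freeGroupEquivCoprodI g = W.prod :=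
      (Monoid.CoprodI.Word.equiv.symm_apply_apply _).symm
    rw [← freeGroupEquivCoprodI.symm_apply_apply g, hW, Monoid.CoprodI.Word.prod, map_list_prod,
      List.map_map, List.map_map]
    refine congrArg List.prod (List.map_congr_left fun p _ => ?_)
    have hp : FreeGroup.lift (fun _ => of p.1) p.2 =
        of p.1 ^ FreeGroup.freeGroupUnitEquivInt p.2 := by
      conv_lhs => rw [← hzpow p.2, map_zpow, FreeGroup.lift_apply_of]
    simpa using hp

/-- The strictly upper triangular matrix with entry `1` in position `(k, k + 1)` if the `k`-th
letter of the sequence `v` is `a`, and all other entries `0`. -/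
def letterMatrix (R : Type*) [CommRing R] [DecidableEq X] {n : ℕ} (v : Fin n → X) (a : X) :
    Matrix (Fin (n + 1)) (Fin (n + 1)) R :=
  Matrix.of fun i j => if ∃ k, i = Fin.castSucc k ∧ j = k.succ ∧ v k = a then 1 else 0

section LetterMatrix

variable {R : Type*} [CommRing R] [DecidableEq X] {n : ℕ} {v : Fin n → X} {a : X}

theorem letterMatrix_apply_eq_zero {i j : Fin (n + 1)} (h : (j : ℕ) ≠ i + 1) :
    letterMatrix R v a i j = 0 := by
  refine if_neg ?_
  rintro ⟨k, rfl, rfl, -⟩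
  exact h rfl

theorem letterMatrix_castSucc_succ (k : Fin n) :
    letterMatrix R v (v k) k.castSucc k.succ = 1 :=
  if_pos ⟨k, rfl, rfl, rfl⟩

theorem letterMatrix_mul_self (hv : ∀ k l : Fin n, (k : ℕ) + 1 = l → v k ≠ v l) :
    letterMatrix R v a * letterMatrix R v a = 0 := by
  ext i j
  rw [Matrix.mul_apply]
  refine Finset.sum_eq_zero fun t _ => ?_
  simp only [letterMatrix, Matrix.of_apply, ite_mul, zero_mul, one_mul]
  refine (ite_eq_right_iff.2 ?_)
  rintro ⟨k, -, rfl, rfl⟩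
  refine if_neg ?_
  rintro ⟨l, hl, -, hla⟩
  exact hv k l (congrArg Fin.val hl) hla.symm

theorem prod_one_add_zsmul_letterMatrix_zero_last (l : List (X × ℤ)) :
    (l.map fun p => 1 + p.2 • letterMatrix R (fun k : Fin l.length => l[k].1) p.1).prod
      0 (Fin.last _) = (l.map fun p => (p.2 : R)).prod := by
  rw [list_prod_apply_of_add_length_eq, ← Fin.prod_univ_getElem]
  · refine Fintype.prod_equiv (finCongr (by simp)) _ _ fun k => ?_
    have hk : (k : ℕ) < l.length := by simpa using k.2
    have h : letterMatrix R (fun k : Fin l.length => l[k].1) l[k].1 ⟨k, by omega⟩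
      ⟨k + 1, by omega⟩ = 1 := letterMatrix_castSucc_succ ⟨k, hk⟩
    simp only [finCongr_apply, Fin.getElem_fin, List.getElem_map, Fin.val_cast, Fin.val_zero,
      zero_add, Matrix.add_apply, Matrix.smul_apply] at h ⊢
    rw [h, Matrix.one_apply_ne (by simp), zero_add, zsmul_one]
  · refine List.forall_mem_map.2 fun p _ i j hij => ?_
    rw [Matrix.add_apply, Matrix.smul_apply, letterMatrix_apply_eq_zero hij.ne', smul_zero,
      add_zero]
    exact Matrix.one_apply_ne (by omega)
  · simp

end LetterMatrix

theorem lift_list_prod_zpow {G : Type*} [Group G] (θ : X → G) (l : List (X × ℤ)) :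
    FreeGroup.lift θ (l.map fun p => of p.1 ^ p.2).prod = (l.map fun p => θ p.1 ^ p.2).prod := by
  simp [map_list_prod, Function.comp_def]

/- If `g = a₁ ^ e₁ ⋯ aₙ ^ eₙ` in syllables, then the corner entry of the image of `g` under
`a ↦ 1 + letterMatrix a` is the product of the `eₖ`. -/
theorem exists_lift_units_unitriangular_ne_one {R : Type*} [CommRing R] {l : List (X × ℤ)}
    (hl : l ≠ []) (hchain : l.IsChain (fun p q => p.1 ≠ q.1))
    (hprod : (l.map fun p => (p.2 : R)).prod ≠ 0) :
    ∃ θ : X → (unitriangular (Fin (l.length + 1)) R)ˣ,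
      FreeGroup.lift θ (l.map fun p => of p.1 ^ p.2).prod ≠ 1 := by
  classical
  let N (a : X) : Matrix (Fin (l.length + 1)) (Fin (l.length + 1)) R :=
    letterMatrix R (fun k => l[k].1) a
  have hN (a : X) (i j : Fin (l.length + 1)) (h : j ≤ i) : N a i j = 0 :=
    letterMatrix_apply_eq_zero (by omega)
  have hN2 (a : X) : N a * N a = 0 := by
    refine letterMatrix_mul_self ?_
    rintro k ⟨_, hk⟩ rfl
    exact List.isChain_iff_getElem.1 hchain k hk
  let θ (a : X) := (oneParameterHom (N a) (hN a) (hN2 a)).toHomUnits (Multiplicative.ofAdd 1)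
  have hθ (a : X) (e : ℤ) : ((θ a ^ e : _ˣ) : Matrix _ _ R) = 1 + e • N a := by
    rw [← map_zpow, ← ofAdd_zsmul, smul_eq_mul, mul_one]
    rfl
  refine ⟨θ, fun h => hprod ?_⟩
  have hone : (l.map fun p => 1 + p.2 • N p.1).prod = 1 := by
    rw [lift_list_prod_zpow] at h
    have := congrArg ((Submonoid.subtype _).comp (Units.coeHom _)) h
    simpa [map_list_prod, Function.comp_def, hθ] using this
  rw [← prod_one_add_zsmul_letterMatrix_zero_last, hone]
  exact Matrix.one_apply_ne (Fin.ne_of_lt (List.length_pos_of_ne_nil hl))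

theorem exists_prime_not_dvd {n : ℤ} (hn : n ≠ 0) : ∃ p : ℕ, p.Prime ∧ ¬(p : ℤ) ∣ n := by
  obtain ⟨p, hnp, hp⟩ := Nat.exists_infinite_primes (n.natAbs + 1)
  exact ⟨p, hp, fun h => hn (Int.eq_zero_of_dvd_of_natAbs_lt_natAbs h hnp)⟩

theorem exists_isPGroup_lift_ne_one {g : FreeGroup X} (hg : g ≠ 1) {s : ℤ} (hs : s ≠ 0) :
    ∃ p : ℕ, p.Prime ∧ ¬(p : ℤ) ∣ s ∧ ∃ (P : Type) (_ : Group P),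
      IsPGroup p P ∧ Finite P ∧ ∃ θ : X → P, FreeGroup.lift θ g ≠ 1 := by
  obtain ⟨l, hchain, hne, rfl⟩ := exists_syllables g
  have hprod : (l.map Prod.snd).prod ≠ 0 :=
    List.prod_ne_zero fun h => by
      obtain ⟨p, hp, hp0⟩ := List.mem_map.1 h
      exact hne p hp hp0
  obtain ⟨p, hp, hdvd⟩ := exists_prime_not_dvd (mul_ne_zero hs hprod)
  have : Fact p.Prime := ⟨hp⟩
  refine ⟨p, hp, fun h => hdvd (h.mul_right _), _, _, isPGroup_units_unitriangular p,
    inferInstance, exists_lift_units_unitriangular_ne_one (R := ZMod p) ?_ hchain fun h => ?_⟩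
  · rintro rfl
    exact hg rfl
  · refine hdvd (Dvd.dvd.mul_left ((ZMod.intCast_zmod_eq_zero_iff_dvd _ p).1 ?_) s)
    simpa [Function.comp_def] using h

end Residual

section ExponentSum

/-- The exponent `±1` encoded by a Boolean in a word. -/
def letterSign (e : Bool) : ℤ := cond e 1 (-1)

theorem mk_singleton_eq_zpow {X : Type*} (y : X) (e : Bool) :
    FreeGroup.mk [(y, e)] = of y ^ letterSign e := by
  cases e
  · exact (zpow_neg_one (of y)).symm
  · exact (zpow_one (of y)).symm

variable {X : Type*} [DecidableEq X]

/-- The sum of the exponents of the letter `x` in a word. -/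
def exponentSum (x : X) (w : List (X × Bool)) : ℤ :=
  (w.map fun p => if p.1 = x then letterSign p.2 else 0).sum

theorem exponentSum_cons (x : X) (p : X × Bool) (w : List (X × Bool)) :
    exponentSum x (p :: w) = (if p.1 = x then letterSign p.2 else 0) + exponentSum x w :=
  List.sum_cons

theorem exponentSum_cons_self (x : X) (e : Bool) (w : List (X × Bool)) :
    exponentSum x ((x, e) :: w) = letterSign e + exponentSum x w := by
  simp [exponentSum_cons]

theorem exponentSum_cons_of_ne {x y : X} (h : y ≠ x) (e : Bool) (w : List (X × Bool)) :
    exponentSum x ((y, e) :: w) = exponentSum x w := by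
  simp [exponentSum_cons, h]

theorem exponentSum_append (x : X) (u v : List (X × Bool)) :
    exponentSum x (u ++ v) = exponentSum x u + exponentSum x v := by
  simp [exponentSum]

theorem lift_update_mul_center {G : Type*} [Group G] {d : G} (hd : d ∈ center G) (θ : X → G)
    (x : X) (c : G) (w : List (X × Bool)) :
    FreeGroup.lift (Function.update θ x (c * d)) (FreeGroup.mk w) =
      FreeGroup.lift (Function.update θ x c) (FreeGroup.mk w) * d ^ exponentSum x w := by
  have hcomm (k : ℤ) (g : G) : d ^ k * g = g * d ^ k := (mem_center_iff.1 (zpow_mem hd k) g).symm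
  induction w with
  | nil => simp [exponentSum, ← FreeGroup.one_eq_mk]
  | cons p w ih =>
    obtain ⟨y, e⟩ := p
    have hy : Function.update θ x (c * d) y ^ letterSign e =
        Function.update θ x c y ^ letterSign e * d ^ (if y = x then letterSign e else 0) := by
      obtain rfl | h := eq_or_ne y x
      · have hcd : Commute c d := mem_center_iff.1 hd c
        simp [hcd.mul_zpow]
      · simp [h]
    rw [freeGroup_mk_cons, mk_singleton_eq_zpow, map_mul, map_mul, map_zpow, map_zpow,
      FreeGroup.lift_apply_of, FreeGroup.lift_apply_of, ih, hy, exponentSum_cons, zpow_add,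
      mul_assoc, mul_assoc, ← mul_assoc (d ^ _), hcomm, mul_assoc]

theorem exists_mul_zpow_eq_one {G : Type*} [Group G] {p : ℕ} (hp : p.Prime) (hG : IsPGroup p G)
    {s : ℤ} (hs : ¬(p : ℤ) ∣ s) (z : G) : ∃ a : ℤ, z * (z ^ a) ^ s = 1 := by
  obtain ⟨k, hk⟩ := hG z
  obtain ⟨a, b, hab⟩ : IsCoprime s ((p : ℤ) ^ k) :=
    ((Nat.prime_iff_prime_int.1 hp).coprime_iff_not_dvd.2 hs).symm.pow_right
  refine ⟨-a, ?_⟩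
  rw [← zpow_mul, ← zpow_one_add, show 1 + -a * s = (p : ℤ) ^ k * b by linarith, zpow_mul,
    ← Nat.cast_pow, zpow_natCast, hk, one_zpow]

/- Solve the equation modulo the centre, then correct the solution by a central element. -/
theorem exists_lift_update_eq_one {x : X} {w : List (X × Bool)} {p : ℕ} (hp : p.Prime)
    (hw : ¬(p : ℤ) ∣ exponentSum x w) (P : Type*) [Group P] [Group.IsNilpotent P]
    (hP : IsPGroup p P) (θ : X → P) :
    ∃ c : P, FreeGroup.lift (Function.update θ x c) (FreeGroup.mk w) = 1 := by
  refine Group.nilpotent_center_quotient_ind (P := fun G _ _ => IsPGroup p G → ∀ θ : X → G,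
    ∃ c, FreeGroup.lift (Function.update θ x c) (FreeGroup.mk w) = 1) P ?_ ?_ hP θ
  · exact fun G _ _ _ _ => ⟨1, Subsingleton.elim _ _⟩
  · intro G _ _ ih hG θ
    let π := QuotientGroup.mk' (center G)
    obtain ⟨c', hc⟩ := ih (hG.to_quotient _) (π ∘ θ)
    obtain ⟨c, rfl⟩ := QuotientGroup.mk'_surjective _ c'
    have hz : FreeGroup.lift (Function.update θ x c) (FreeGroup.mk w) ∈ center G := by
      have hπ : π.comp (FreeGroup.lift (Function.update θ x c)) =
          FreeGroup.lift (Function.update (π ∘ θ) x (π c)) :=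
        FreeGroup.ext_hom _ _ fun y => by simp [← Function.comp_update]
      rw [← QuotientGroup.ker_mk' (center G)]
      exact (DFunLike.congr_fun hπ _).trans hc
    obtain ⟨a, ha⟩ := exists_mul_zpow_eq_one hp hG hw
      (FreeGroup.lift (Function.update θ x c) (FreeGroup.mk w))
    exact ⟨_, (lift_update_mul_center (zpow_mem hz a) θ x c w).trans ha⟩

theorem freeModulo_compl_singleton_of_exponentSum_ne_zero {x : X} {w : List (X × Bool)}
    (hw : exponentSum x w ≠ 0) : FreeModulo {x}ᶜ {FreeGroup.mk w} := by
  refine disjoint_def.2 fun {g} hgx hgw => of_not_not fun hg => ?_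
  obtain ⟨p, hp, hdvd, P, _, hP, _, θ, hθ⟩ := exists_isPGroup_lift_ne_one hg hw
  have : Fact p.Prime := ⟨hp⟩
  have := hP.isNilpotent
  obtain ⟨c, hc⟩ := exists_lift_update_eq_one hp hdvd P hP θ
  have hker : normalClosure {FreeGroup.mk w} ≤ (FreeGroup.lift (Function.update θ x c)).ker :=
    normalClosure_le_normal (Set.singleton_subset_iff.2 hc)
  have heq : Set.EqOn (FreeGroup.lift (Function.update θ x c)) (FreeGroup.lift θ)
      (letterSubgroup {x}ᶜ) :=
    eqOn_letterSubgroup fun y hy => by simp [Set.mem_compl_singleton_iff.1 hy]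
  exact hθ ((heq hgx).symm.trans (hker hgw))

end ExponentSum

section CyclicWords

variable {X : Type*} {u v w : List (X × Bool)}

theorem isCyclicallyReduced_iff_isReduced_append_self :
    FreeGroup.IsCyclicallyReduced w ↔ FreeGroup.IsReduced (w ++ w) := by
  rw [FreeGroup.isCyclicallyReduced_iff, FreeGroup.IsReduced, FreeGroup.IsReduced,
    List.isChain_append]
  tauto

theorem isCyclicallyReduced_append_comm (h : FreeGroup.IsCyclicallyReduced (u ++ v)) :
    FreeGroup.IsCyclicallyReduced (v ++ u) := by
  have h3 := (h.flatten_replicate 3).isReduced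
  rw [isCyclicallyReduced_iff_isReduced_append_self]
  exact List.IsChain.infix h3 ⟨u, v, by simp [List.replicate]⟩

theorem normalClosure_mk_append_comm_le (u v : List (X × Bool)) :
    normalClosure {FreeGroup.mk (u ++ v)} ≤ normalClosure {FreeGroup.mk (v ++ u)} := by
  refine normalClosure_le_normal (Set.singleton_subset_iff.2 ?_)
  have hconj : FreeGroup.mk (u ++ v) =
      FreeGroup.mk u * FreeGroup.mk (v ++ u) * (FreeGroup.mk u)⁻¹ := by
    rw [← FreeGroup.mul_mk, ← FreeGroup.mul_mk, mul_assoc, mul_assoc, mul_inv_cancel, mul_one]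
  rw [hconj]
  exact normalClosure_normal.conj_mem _ (subset_normalClosure (Set.mem_singleton _)) _

theorem finite_setOf_occursIn (w : List (X × Bool)) : {x | OccursIn x w}.Finite :=
  (w.finite_toSet.image Prod.fst).subset fun x ⟨e, he⟩ => ⟨(x, e), he, rfl⟩

end CyclicWords

section MagnusRewriting

variable {X : Type*} [DecidableEq X] (x : X)

/-- Magnus rewriting: every occurrence of the letter `x` is deleted, and every other letter `y`
is replaced by `(l, y)`, which stands for `x ^ l * y * x ^ (-l)`. Its *level* `l` is `k` plus the
exponent sum of `x` in the part of the word preceding the letter. -/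
def magnusRewrite (k : ℤ) : List (X × Bool) → List ((ℤ × X) × Bool)
  | [] => []
  | p :: w =>
    if p.1 = x then magnusRewrite (k + letterSign p.2) w
    else ((k, p.1), p.2) :: magnusRewrite k w

variable {x}

theorem magnusRewrite_cons_self (k : ℤ) (e : Bool) (w : List (X × Bool)) :
    magnusRewrite x k ((x, e) :: w) = magnusRewrite x (k + letterSign e) w :=
  if_pos rfl

theorem magnusRewrite_cons_of_ne {y : X} (h : y ≠ x) (k : ℤ) (e : Bool) (w : List (X × Bool)) :
    magnusRewrite x k ((y, e) :: w) = ((k, y), e) :: magnusRewrite x k w :=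
  if_neg h

theorem magnusRewrite_append (k : ℤ) (u v : List (X × Bool)) :
    magnusRewrite x k (u ++ v) =
      magnusRewrite x k u ++ magnusRewrite x (k + exponentSum x u) v := by
  induction u generalizing k with
  | nil => simp [magnusRewrite, exponentSum]
  | cons p u ih => by_cases h : p.1 = x <;> simp [magnusRewrite, exponentSum_cons, h, ih, add_assoc]

theorem magnusRewrite_add (k j : ℤ) (w : List (X × Bool)) :
    magnusRewrite x (k + j) w =
      (magnusRewrite x k w).map fun q => ((q.1.1 + j, q.1.2), q.2) := by
  induction w generalizing k with
  | nil => rfl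
  | cons p w ih => by_cases h : p.1 = x <;> simp [magnusRewrite, h, ← ih, add_right_comm]

theorem occursIn_magnusRewrite_iff {y : ℤ × X} {j : ℤ} {w : List (X × Bool)} :
    OccursIn y (magnusRewrite x j w) ↔ OccursIn (y.1 - j, y.2) (magnusRewrite x 0 w) := by
  obtain ⟨l, a⟩ := y
  rw [← zero_add j, magnusRewrite_add]
  simp [OccursIn, ← eq_sub_iff_add_eq]

theorem length_magnusRewrite_add_countP (k : ℤ) (w : List (X × Bool)) :
    (magnusRewrite x k w).length + w.countP (·.1 = x) = w.length := by
  induction w generalizing k with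
  | nil => rfl
  | cons p w ih =>
    by_cases h : p.1 = x
    · simp [magnusRewrite, h, ← add_assoc, ih]
    · simp [magnusRewrite, h, add_right_comm _ 1, ih]

theorem length_magnusRewrite_lt {w : List (X × Bool)} (hx : OccursIn x w) (k : ℤ) :
    (magnusRewrite x k w).length < w.length := by
  obtain ⟨e, he⟩ := hx
  have hpos : 0 < w.countP (·.1 = x) := List.countP_pos_iff.2 ⟨_, he, by simp⟩
  have := length_magnusRewrite_add_countP (x := x) k w
  omega

theorem letterSign_mul_self (e : Bool) : letterSign e * letterSign e = 1 := by
  cases e <;> rfl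

/- A reduced word starting with `x ^ (±1)` starts with a maximal power `x ^ (±n)`, after which the
level has moved in the direction of the sign. -/
theorem letterSign_mul_level_sub_pos {w : List (X × Bool)} {e : Bool} {k : ℤ}
    {q : (ℤ × X) × Bool} (hw : FreeGroup.IsReduced ((x, e) :: w))
    (hq : q ∈ (magnusRewrite x k ((x, e) :: w)).head?) : 0 < letterSign e * (q.1.1 - k) := by
  induction w generalizing e k with
  | nil => simp [magnusRewrite] at hq
  | cons p w ih =>
    obtain ⟨a, e'⟩ := p
    rw [magnusRewrite_cons_self] at hq
    rw [FreeGroup.IsReduced, List.isChain_cons_cons] at hw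
    obtain rfl | h := eq_or_ne a x
    · obtain rfl : e = e' := hw.1 rfl
      linarith [ih hw.2 hq, letterSign_mul_self e]
    · rw [magnusRewrite_cons_of_ne h, List.head?_cons, Option.mem_some_iff] at hq
      subst hq
      simp [letterSign_mul_self]

theorem letterSign_mul_exponentSum_pos {w : List (X × Bool)} {e : Bool}
    (hw : FreeGroup.IsReduced ((x, e) :: w)) (hx : ∀ y, OccursIn y w → y = x) :
    0 < letterSign e * exponentSum x ((x, e) :: w) := by
  induction w generalizing e with
  | nil => simp [exponentSum, letterSign_mul_self]
  | cons p w ih =>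
    obtain ⟨a, e'⟩ := p
    obtain rfl := hx a ⟨e', List.mem_cons_self⟩
    rw [FreeGroup.IsReduced, List.isChain_cons_cons] at hw
    obtain rfl : e = e' := hw.1 rfl
    rw [exponentSum_cons_self]
    linarith [ih hw.2 fun y ⟨e, he⟩ => hx y ⟨e, List.mem_cons_of_mem _ he⟩, letterSign_mul_self e]

theorem exists_occursIn_ne {w : List (X × Bool)} (hw : FreeGroup.IsReduced w) (hne : w ≠ [])
    (hsum : exponentSum x w = 0) : ∃ y, OccursIn y w ∧ y ≠ x := by
  by_contra! h
  obtain ⟨⟨y, e⟩, w, rfl⟩ := List.exists_cons_of_ne_nil hne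
  obtain rfl := h y ⟨e, List.mem_cons_self⟩
  have := letterSign_mul_exponentSum_pos hw fun y ⟨e, he⟩ => h y ⟨e, List.mem_cons_of_mem _ he⟩
  simp [hsum] at this

theorem occursIn_magnusRewrite_of_ne {y : X} (hyx : y ≠ x) {w : List (X × Bool)} {k : ℤ}
    (hy : OccursIn y w) : ∃ l, OccursIn (l, y) (magnusRewrite x k w) := by
  obtain ⟨e, he⟩ := hy
  obtain ⟨u, v, rfl⟩ := List.append_of_mem he
  rw [magnusRewrite_append, magnusRewrite_cons_of_ne hyx]
  refine ⟨k + exponentSum x u, e, ?_⟩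
  exact List.mem_append_right _ List.mem_cons_self

theorem exists_occursIn_magnusRewrite_level_ne {w : List (X × Bool)}
    (hw : FreeGroup.IsReduced w) (hx : OccursIn x w) (hsum : exponentSum x w = 0) (k : ℤ) :
    ∃ y, OccursIn y (magnusRewrite x k w) ∧ y.1 ≠ k := by
  induction w with
  | nil => simp [OccursIn] at hx
  | cons p w ih =>
    obtain ⟨a, e⟩ := p
    obtain rfl | h := eq_or_ne a x
    · obtain ⟨y, ⟨e', he'⟩, hy⟩ := exists_occursIn_ne hw (List.cons_ne_nil _ _) hsum
      obtain ⟨l, e'', hl⟩ := occursIn_magnusRewrite_of_ne (k := k) hy ⟨e', he'⟩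
      have hnil : magnusRewrite a k ((a, e) :: w) ≠ [] := List.ne_nil_of_mem hl
      refine ⟨_, ⟨_, List.head_mem hnil⟩, sub_ne_zero.1 ?_⟩
      exact right_ne_zero_of_mul (letterSign_mul_level_sub_pos hw (List.head_mem_head? hnil)).ne'
    · rw [exponentSum_cons_of_ne h] at hsum
      obtain ⟨e', he'⟩ := hx
      have hx' : OccursIn x w := ⟨e', (List.mem_cons.1 he').resolve_left fun h' =>
        h (congrArg Prod.fst h').symm⟩
      obtain ⟨y, ⟨e'', hy⟩, hyk⟩ := ih (List.isChain_cons.1 hw).2 hx' hsum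
      rw [magnusRewrite_cons_of_ne h]
      exact ⟨y, ⟨e'', List.mem_cons_of_mem _ hy⟩, hyk⟩

theorem isReduced_magnusRewrite {w : List (X × Bool)} (hw : FreeGroup.IsReduced w) (k : ℤ) :
    FreeGroup.IsReduced (magnusRewrite x k w) := by
  induction w generalizing k with
  | nil => exact List.IsChain.nil
  | cons p w ih =>
    obtain ⟨a, e⟩ := p
    have hw' : FreeGroup.IsReduced w := (List.isChain_cons.1 hw).2
    obtain rfl | h := eq_or_ne a x
    · exact magnusRewrite_cons_self k e w ▸ ih hw' _
    · rw [magnusRewrite_cons_of_ne h, FreeGroup.IsReduced, List.isChain_cons]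
      refine ⟨fun q hq hqe => ?_, ih hw' k⟩
      obtain _ | ⟨⟨b, e'⟩, w⟩ := w
      · simp [magnusRewrite] at hq
      obtain rfl | hb := eq_or_ne b x
      · simpa [← hqe] using letterSign_mul_level_sub_pos hw' hq
      · rw [magnusRewrite_cons_of_ne hb, List.head?_cons, Option.mem_some_iff] at hq
        subst hq
        exact (List.isChain_cons_cons.1 hw).1 (congrArg Prod.snd hqe)

theorem isCyclicallyReduced_magnusRewrite {w : List (X × Bool)}
    (hw : FreeGroup.IsCyclicallyReduced w) (hsum : exponentSum x w = 0) (k : ℤ) :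
    FreeGroup.IsCyclicallyReduced (magnusRewrite x k w) := by
  rw [isCyclicallyReduced_iff_isReduced_append_self] at hw ⊢
  simpa [magnusRewrite_append, hsum] using isReduced_magnusRewrite (x := x) hw k

end MagnusRewriting

section MagnusHom

theorem normal_map_inl {N G : Type*} [Group N] [Group G] (φ : G →* MulAut N) {K : Subgroup N}
    [K.Normal] (hK : ∀ g, ∀ n ∈ K, φ g n ∈ K) :
    (K.map (SemidirectProduct.inl : N →* N ⋊[φ] G)).Normal := by
  constructor
  rintro _ ⟨n, hn, rfl⟩ y
  refine ⟨y.left * φ y.right n * y.left⁻¹, Normal.conj_mem ‹_› _ (hK _ n hn) _, ?_⟩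
  conv_rhs => rw [← SemidirectProduct.inl_left_mul_inr_right y]
  simp only [map_mul, map_inv, SemidirectProduct.inl_aut, mul_inv_rev, mul_assoc]

/-- The action of the integers on the free group on `ℤ × X` by translation of the levels. -/
def levelShift (X : Type*) : Multiplicative ℤ →* MulAut (FreeGroup (ℤ × X)) where
  toFun k := FreeGroup.freeGroupCongr ((Equiv.addRight k.toAdd).prodCongr (Equiv.refl X))
  map_one' := MulEquiv.toMonoidHom_injective <| FreeGroup.ext_hom _ _ fun y => by simp
  map_mul' a b := MulEquiv.toMonoidHom_injective <| FreeGroup.ext_hom _ _ fun y => by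
    simp [Prod.map, add_left_comm, add_comm]

variable {X : Type*}

theorem levelShift_mk (k : ℤ) (w : List ((ℤ × X) × Bool)) :
    levelShift X (Multiplicative.ofAdd k) (FreeGroup.mk w) =
      FreeGroup.mk (w.map fun q => ((q.1.1 + k, q.1.2), q.2)) :=
  rfl

variable [DecidableEq X]

/-- The homomorphism underlying Magnus rewriting: `x` maps to the generator of the acting group
`ℤ`, so that a letter `(l, y)` becomes the conjugate of `y` by `x ^ l`. -/
def magnusHom (x : X) : FreeGroup X →* FreeGroup (ℤ × X) ⋊[levelShift X] Multiplicative ℤ :=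
  FreeGroup.lift fun y => if y = x then SemidirectProduct.inr (Multiplicative.ofAdd 1)
    else SemidirectProduct.inl (of (0, y))

variable {x : X}

theorem magnusHom_mk_singleton_self (e : Bool) :
    magnusHom x (FreeGroup.mk [(x, e)]) =
      SemidirectProduct.inr (Multiplicative.ofAdd (letterSign e)) := by
  rw [mk_singleton_eq_zpow, map_zpow, magnusHom, FreeGroup.lift_apply_of, if_pos rfl, ← map_zpow,
    ← ofAdd_zsmul, smul_eq_mul, mul_one]

theorem magnusHom_mk_singleton_of_ne {y : X} (h : y ≠ x) (e : Bool) :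
    magnusHom x (FreeGroup.mk [(y, e)]) = SemidirectProduct.inl (FreeGroup.mk [((0, y), e)]) := by
  simp [mk_singleton_eq_zpow, magnusHom, h]

theorem inr_mul_magnusHom_mk (k : ℤ) (w : List (X × Bool)) :
    SemidirectProduct.inr (Multiplicative.ofAdd k) * magnusHom x (FreeGroup.mk w) =
      SemidirectProduct.inl (FreeGroup.mk (magnusRewrite x k w)) *
        SemidirectProduct.inr (Multiplicative.ofAdd (k + exponentSum x w)) := by
  induction w generalizing k with
  | nil => simp [magnusRewrite, exponentSum, ← FreeGroup.one_eq_mk]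
  | cons p w ih =>
    obtain ⟨y, e⟩ := p
    rw [freeGroup_mk_cons, map_mul, ← mul_assoc]
    obtain rfl | h := eq_or_ne y x
    · rw [magnusHom_mk_singleton_self, ← map_mul, ← ofAdd_add, ih, magnusRewrite_cons_self,
        exponentSum_cons_self, add_assoc]
    · have hconj : (SemidirectProduct.inr (Multiplicative.ofAdd k) :
          FreeGroup (ℤ × X) ⋊[levelShift X] Multiplicative ℤ) *
            SemidirectProduct.inl (FreeGroup.mk [((0, y), e)]) =
          SemidirectProduct.inl (FreeGroup.mk [((k, y), e)]) *
            SemidirectProduct.inr (Multiplicative.ofAdd k) := by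
        have hshift : levelShift X (Multiplicative.ofAdd k) (FreeGroup.mk [((0, y), e)]) =
            FreeGroup.mk [((k, y), e)] := by simp [levelShift_mk]
        rw [← hshift, SemidirectProduct.inl_aut, map_inv, inv_mul_cancel_right]
      rw [magnusHom_mk_singleton_of_ne h, hconj, mul_assoc, ih, ← mul_assoc, ← map_mul,
        magnusRewrite_cons_of_ne h, exponentSum_cons_of_ne h, ← freeGroup_mk_cons]

theorem magnusHom_eqOn_inl_comp_map :
    Set.EqOn (magnusHom x) (SemidirectProduct.inl.comp (FreeGroup.map (Prod.mk 0)))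
      (letterSubgroup {x}ᶜ) :=
  eqOn_letterSubgroup fun y hy => by simp [magnusHom, Set.mem_compl_singleton_iff.1 hy]

theorem map_mem_normalClosure_range_magnusRewrite {w : List (X × Bool)}
    (hsum : exponentSum x w = 0) {g : FreeGroup X} (hgx : g ∈ letterSubgroup {x}ᶜ)
    (hgw : g ∈ normalClosure {FreeGroup.mk w}) :
    FreeGroup.map (Prod.mk 0) g ∈
      normalClosure (Set.range fun j => FreeGroup.mk (magnusRewrite x j w)) := by
  set K := normalClosure (Set.range fun j => FreeGroup.mk (magnusRewrite x j w)) with hK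
  have hshift (k : Multiplicative ℤ) : K ≤ K.comap (levelShift X k).toMonoidHom := by
    conv_lhs => rw [hK]
    refine normalClosure_le_normal (Set.range_subset_iff.2 fun j => ?_)
    exact subset_normalClosure ⟨j + k.toAdd, congrArg _ (magnusRewrite_add j k.toAdd w)⟩
  have := normal_map_inl (levelShift X) fun k n hn => hshift k hn
  have hmk : magnusHom x (FreeGroup.mk w) =
      SemidirectProduct.inl (FreeGroup.mk (magnusRewrite x 0 w)) := by
    simpa [hsum] using inr_mul_magnusHom_mk (x := x) 0 w
  have hle : normalClosure {FreeGroup.mk w} ≤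
      (K.map SemidirectProduct.inl).comap (magnusHom x) :=
    normalClosure_le_normal <| Set.singleton_subset_iff.2
      ⟨_, subset_normalClosure ⟨0, rfl⟩, hmk.symm⟩
  obtain ⟨n, hn, hng⟩ := hle hgw
  rw [magnusHom_eqOn_inl_comp_map hgx] at hng
  exact SemidirectProduct.inl_injective hng ▸ hn

end MagnusHom

section OneRelator

variable {X : Type*} [DecidableEq X] {x : X} {w : List (X × Bool)} {top bot : ℤ × X}

theorem isStaggered_magnusRewrite (htop : OccursIn top (magnusRewrite x 0 w))
    (hbot : OccursIn bot (magnusRewrite x 0 w))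
    (hmax : ∀ y, OccursIn y (magnusRewrite x 0 w) → y.1 ≤ top.1)
    (hmin : ∀ y, OccursIn y (magnusRewrite x 0 w) → bot.1 ≤ y.1)
    (hfree : ∀ j y, OccursIn y (magnusRewrite x j w) →
      FreeModulo {y}ᶜ {FreeGroup.mk (magnusRewrite x j w)}) :
    IsStaggered (fun j => magnusRewrite x j w) (fun j : ℤ => (top.1 + j, top.2))
      (fun j => (bot.1 + j, bot.2)) where
  freeModulo_top j := hfree j _ (by simpa [occursIn_magnusRewrite_iff (j := j)] using htop)
  freeModulo_bot j := hfree j _ (by simpa [occursIn_magnusRewrite_iff (j := j)] using hbot)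
  not_occursIn_top i j hij h := by
    have : top.1 + j - i ≤ top.1 := hmax _ (occursIn_magnusRewrite_iff.1 h)
    linarith
  not_occursIn_bot i j hij h := by
    have : bot.1 ≤ bot.1 + i - j := hmin _ (occursIn_magnusRewrite_iff.1 h)
    linarith

theorem freeModulo_compl_singleton_of_magnusRewrite (hsum : exponentSum x w = 0)
    {y z : ℤ × X} (hy : OccursIn y (magnusRewrite x 0 w))
    (hz : OccursIn z (magnusRewrite x 0 w)) (hyz : y.1 ≠ z.1)
    (hfree : ∀ j y, OccursIn y (magnusRewrite x j w) →
      FreeModulo {y}ᶜ {FreeGroup.mk (magnusRewrite x j w)}) :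
    FreeModulo {x}ᶜ {FreeGroup.mk w} := by
  obtain ⟨top, htop, hmax⟩ := Set.exists_max_image _ Prod.fst (finite_setOf_occursIn _) ⟨y, hy⟩
  obtain ⟨bot, hbot, hmin⟩ := Set.exists_min_image _ Prod.fst (finite_setOf_occursIn _) ⟨y, hy⟩
  have hlt : bot.1 < top.1 := by
    have := hmax _ hy
    have := hmax _ hz
    have := hmin _ hy
    have := hmin _ hz
    omega
  have hst := isStaggered_magnusRewrite htop hbot hmax hmin hfree
  have hzero : FreeModulo {y : ℤ × X | y.1 = 0}
      (Set.range fun j => FreeGroup.mk (magnusRewrite x j w)) := by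
    refine hst.freeModulo_range (S := {j | bot.1 + j < 0}) ?_ ?_ ?_
    · exact fun i j hji hi => (add_le_add_right hji _).trans_lt hi
    · exact fun j hj => hj.ne
    · exact fun j hj => ((not_lt.1 hj).trans_lt (add_lt_add_left hlt j)).ne'
  refine disjoint_def.2 fun {g} hgx hgw => ?_
  have hg : FreeGroup.map (Prod.mk (0 : ℤ)) g ∈ letterSubgroup {y : ℤ × X | y.1 = 0} := by
    refine map_mem_letterSubgroup (fun _ => ?_) g
    rfl
  refine FreeGroup.map_injective (Prod.mk_right_injective (0 : ℤ)) ?_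
  rw [map_one]
  exact disjoint_def.1 hzero hg (map_mem_normalClosure_range_magnusRewrite hsum hgx hgw)

/-- Magnus's **Freiheitssatz** for one-relator groups. -/
theorem freeModulo_compl_singleton_of_occursIn {X : Type u} {w : List (X × Bool)}
    (hw : FreeGroup.IsCyclicallyReduced w) {x : X} (hx : OccursIn x w) :
    FreeModulo {x}ᶜ {FreeGroup.mk w} := by
  classical
  induction hn : w.length using Nat.strong_induction_on generalizing X with
  | _ n ih =>
    by_cases hsum : exponentSum x w = 0
    swap
    · exact freeModulo_compl_singleton_of_exponentSum_ne_zero hsum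
    obtain ⟨a, ⟨e, ha⟩, hax⟩ := exists_occursIn_ne hw.isReduced
      (List.ne_nil_of_mem hx.choose_spec) hsum
    obtain ⟨s, t, rfl⟩ := List.append_of_mem ha
    refine Disjoint.mono_right (normalClosure_mk_append_comm_le s ((a, e) :: t)) ?_
    have hcyc := isCyclicallyReduced_append_comm hw
    rw [exponentSum_append, add_comm, ← exponentSum_append] at hsum
    have hx' : OccursIn x (((a, e) :: t) ++ s) := by
      simpa only [OccursIn, List.mem_append, or_comm] using hx
    have hocc : OccursIn (0, a) (magnusRewrite x 0 (((a, e) :: t) ++ s)) :=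
      ⟨e, by simp [magnusRewrite_cons_of_ne hax]⟩
    obtain ⟨y, hy, hy0⟩ := exists_occursIn_magnusRewrite_level_ne hcyc.isReduced hx' hsum 0
    refine freeModulo_compl_singleton_of_magnusRewrite hsum hy hocc hy0 fun j z hz =>
      ih _ ?_ (isCyclicallyReduced_magnusRewrite hcyc hsum j) hz rfl
    rw [← hn, List.length_append, add_comm, ← List.length_append]
    exact length_magnusRewrite_lt hx' j

end OneRelator

theorem WordReduced.isReduced {X : Type*} {w : List (X × Bool)} (h : WordReduced w) :
    FreeGroup.IsReduced w :=
  List.IsChain.imp (fun _ _ hpq hx => of_not_not fun hne => hpq ⟨hx, Bool.eq_not.2 hne⟩) h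

theorem WordCyclicallyReduced.isCyclicallyReduced {X : Type*} {w : List (X × Bool)}
    (h : WordCyclicallyReduced w) : FreeGroup.IsCyclicallyReduced w :=
  FreeGroup.isCyclicallyReduced_iff.2
    ⟨h.1.isReduced, fun p hp q hq hx => of_not_not fun hne =>
      h.2 p hp q hq ⟨hx, Bool.eq_not.2 hne⟩⟩

theorem freiheitssatz_staggered_general {X ι : Type*} [LinearOrder ι] (A : Set X)
    [Preorder ↥(Aᶜ : Set X)] (w : ι → List (X × Bool)) (hcyc : ∀ j, WordCyclicallyReduced (w j))
    (M μ : ι → ↥(Aᶜ : Set X)) (hMocc : ∀ j, OccursIn (M j : X) (w j))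
    (hMmax : ∀ j, ∀ y : ↥(Aᶜ : Set X), OccursIn (y : X) (w j) → y ≤ M j)
    (hμocc : ∀ j, OccursIn (μ j : X) (w j))
    (hμmin : ∀ j, ∀ y : ↥(Aᶜ : Set X), OccursIn (y : X) (w j) → μ j ≤ y)
    (hM : StrictMono M) (hμ : StrictMono μ) :
    Function.Injective
      (FreeGroup.lift (fun a : A =>
        (PresentedGroup.of (a : X) :
          PresentedGroup (Set.range fun j => FreeGroup.mk (w j)))) :
        FreeGroup A →* PresentedGroup (Set.range fun j => FreeGroup.mk (w j))) := by
  have hstag : IsStaggered w (fun j => (M j : X)) fun j => (μ j : X) :=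
    { freeModulo_top := fun j =>
        freeModulo_compl_singleton_of_occursIn (hcyc j).isCyclicallyReduced (hMocc j)
      freeModulo_bot := fun j =>
        freeModulo_compl_singleton_of_occursIn (hcyc j).isCyclicallyReduced (hμocc j)
      not_occursIn_top := fun i j hij h => (hM hij).not_ge (hMmax i (M j) h)
      not_occursIn_bot := fun i j hij h => (hμ hij).not_ge (hμmin j (μ i) h) }
  have hfree : FreeModulo A (Set.range fun j => FreeGroup.mk (w j)) :=
    hstag.freeModulo_range isLowerSet_univ (fun j _ => (μ j).2) fun j hj => (hj trivial).elim
  exact hfree.injective_lift_of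

/-- **Theorem `thm:staggered` (Freiheitssatz for staggered presentations).**
Let `G = ⟨X ∣ w₁, …, w_m⟩` where the `wⱼ` are nonempty reduced, cyclically reduced
words, each containing a letter of `X ∖ A`.  Suppose there is a linear order on
`X ∖ A` such that, writing `M j` (resp. `μ j`) for the largest (resp. smallest)
letter of `X ∖ A` occurring in `wⱼ`, one has `M i < M j` and `μ i < μ j` whenever
`i < j` (so the presentation is staggered).  Then the natural homomorphism from the
free group on `A` to `G` is injective. -/
theorem freiheitssatz_staggered {X : Type*} (A : Set X)
    [LinearOrder (↥(Aᶜ : Set X))]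
    (m : ℕ) (w : Fin m → List (X × Bool))
    (hwne : ∀ j, w j ≠ []) (hwred : ∀ j, WordReduced (w j))
    (hwcyc : ∀ j, WordCyclicallyReduced (w j))
    (houtside : ∀ j, ∃ x : X, x ∉ A ∧ OccursIn x (w j))
    (M μ : Fin m → ↥(Aᶜ : Set X))
    (hMocc : ∀ j, OccursIn (M j : X) (w j))
    (hMmax : ∀ j, ∀ y : ↥(Aᶜ : Set X), OccursIn (y : X) (w j) → y ≤ M j)
    (hμocc : ∀ j, OccursIn (μ j : X) (w j))
    (hμmin : ∀ j, ∀ y : ↥(Aᶜ : Set X), OccursIn (y : X) (w j) → μ j ≤ y)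
    (hstaggered : ∀ i j : Fin m, i < j → M i < M j ∧ μ i < μ j) :
    Function.Injective
      (FreeGroup.lift (fun a : A =>
        (PresentedGroup.of (a : X) :
          PresentedGroup (Set.range fun j => FreeGroup.mk (w j)))) :
        FreeGroup A →* PresentedGroup (Set.range fun j => FreeGroup.mk (w j))) :=
  freiheitssatz_staggered_general A w hwcyc M μ hMocc hMmax hμocc hμmin
    (fun i j hij => (hstaggered i j hij).1) fun i j hij => (hstaggered i j hij).2
end
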